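/- arXiv:math/0511730 — 4 statements merged into one kernel-verified Lean document; each statement's English description precedes it below -/
import Mathlib

section
/- Let ψ : Perm(Fin n) → T be the monoid homomorphism with ψ(s_i) = σ_i. Then for all permutations w, v ∈ Perm(Fin n), the elements ψ(w⁻¹)τ_1ψ(w) and ψ(v⁻¹)τ_1ψ(v) of T commute; i.e., all conjugates of τ_1 by units commute with each other. -/
/-!
The presentation of `IT_n` (the greatest factorizable inverse submonoid of the dual
symmetric inverse monoid) from Kudryavtseva–Mazorchuk, Section 4.

Generators: `Sum.inl i` represents `σ_{i+1}` and `Sum.inr i` represents `τ_{i+1}`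
for `i : Fin (n-1)` (so the paper's indices `1, …, n-1` correspond to `i.val + 1`).
-/

/-- Generator type: `Sum.inl i` is `σ_{i+1}`, `Sum.inr i` is `τ_{i+1}`. -/
abbrev ITGen (n : ℕ) := Fin (n - 1) ⊕ Fin (n - 1)

/-- The word `σ_{i+1}` in the free monoid. -/
def fσ {n : ℕ} (i : Fin (n - 1)) : FreeMonoid (ITGen n) := FreeMonoid.of (Sum.inl i)

/-- The word `τ_{i+1}` in the free monoid. -/
def fτ {n : ℕ} (i : Fin (n - 1)) : FreeMonoid (ITGen n) := FreeMonoid.of (Sum.inr i)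

/-- The defining relations of the presentation of `IT_n`. -/
inductive ITRel (n : ℕ) : FreeMonoid (ITGen n) → FreeMonoid (ITGen n) → Prop
  | sigma_sq (i) : ITRel n (fσ i * fσ i) 1
  | sigma_comm (i j) (h : 1 < Nat.dist i.1 j.1) : ITRel n (fσ i * fσ j) (fσ j * fσ i)
  | braid (i j) (h : Nat.dist i.1 j.1 = 1) :
      ITRel n (fσ i * fσ j * fσ i) (fσ j * fσ i * fσ j)
  | tau_idem (i) : ITRel n (fτ i * fτ i) (fτ i)
  | tau_comm (i j) (h : i ≠ j) : ITRel n (fτ i * fτ j) (fτ j * fτ i)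
  | tau_sigma (i) : ITRel n (fτ i * fσ i) (fτ i)
  | sigma_tau (i) : ITRel n (fσ i * fτ i) (fτ i)
  | tau_sigma_comm (i j) (h : 1 < Nat.dist i.1 j.1) : ITRel n (fτ i * fσ j) (fσ j * fτ i)
  | sigma_tau_sigma (i j) (h : Nat.dist i.1 j.1 = 1) :
      ITRel n (fσ i * fτ j * fσ i) (fσ j * fτ i * fσ j)
  | tau_sigma_tau (i j) (h : Nat.dist i.1 j.1 = 1) :
      ITRel n (fτ i * fσ j * fτ i) (fτ i * fτ j)

/-- The monoid `T` given by the presentation above. -/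
abbrev ITMonoid (n : ℕ) := PresentedMonoid (ITRel n)

/-- The generator `σ_{i+1}` of `T`. -/
def σI {n : ℕ} (i : Fin (n - 1)) : ITMonoid n := PresentedMonoid.of (ITRel n) (Sum.inl i)

/-- The generator `τ_{i+1}` of `T`. -/
def τI {n : ℕ} (i : Fin (n - 1)) : ITMonoid n := PresentedMonoid.of (ITRel n) (Sum.inr i)

/-- The point `i` of `{1, …, n}` (0-based: `i.val`). -/
def lo {n : ℕ} (i : Fin (n - 1)) : Fin n := ⟨i.1, by have := i.2; omega⟩

/-- The point `i + 1` of `{1, …, n}` (0-based: `i.val + 1`). -/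
def hi {n : ℕ} (i : Fin (n - 1)) : Fin n := ⟨i.1 + 1, by have := i.2; omega⟩

/-- The adjacent transposition `s_{i+1} = (i+1, i+2)` of the symmetric group on `{1, …, n}`. -/
def sPerm {n : ℕ} (i : Fin (n - 1)) : Equiv.Perm (Fin n) := Equiv.swap (lo i) (hi i)

theorem rel_eq {n : ℕ} {a b : FreeMonoid (ITGen n)} (h : ITRel n a b) :
    PresentedMonoid.mk (ITRel n) a = PresentedMonoid.mk (ITRel n) b :=
  Quotient.sound (ConGen.Rel.of _ _ h)

theorem exists_perm_of_inj {n k : ℕ} (f : Fin k → Fin n) (hf : Function.Injective f)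
    (hk : k ≤ n) : ∃ g : Equiv.Perm (Fin n), ∀ i, g (f i) = Fin.castLE hk i := by
  have := Equiv.Perm.isMultiplyPretransitive (Fin n) k
  obtain ⟨g, hg⟩ := this.exists_smul_eq ⟨f, hf⟩ ⟨Fin.castLE hk, Fin.castLE_injective hk⟩
  exact ⟨g, fun i => by simpa using DFunLike.congr_fun hg i⟩

theorem inj3 {α : Type*} {a b c : α} (h1 : a ≠ b) (h2 : b ≠ c) (h3 : a ≠ c) :
    Function.Injective ![a, b, c] := by
  intro i j
  fin_cases i <;> fin_cases j <;> simp <;> grind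

theorem inj4 {α : Type*} {a b c d : α} (h1 : a ≠ b) (h2 : c ≠ d) (h3 : a ≠ c) (h4 : a ≠ d)
    (h5 : b ≠ c) (h6 : b ≠ d) :
    Function.Injective ![a, b, c, d] := by
  intro i j
  fin_cases i <;> fin_cases j <;> simp <;> grind

theorem conj_swap {n : ℕ} {M : Type*} [Monoid M] (ψ : Equiv.Perm (Fin n) →* M) (t : M)
    (hs : ∀ i : Fin (n - 1), 2 ≤ i.1 → Commute (ψ (sPerm i)) t) :
    ∀ (d : ℕ) (a b : Fin n), 2 ≤ a.1 → b.1 = a.1 + d + 1 → Commute (ψ (Equiv.swap a b)) t := by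
  intro d
  induction d with
  | zero =>
    intro a b ha hb
    have := hs ⟨a.1, by omega⟩ ha
    have h1 : lo (n := n) ⟨a.1, by omega⟩ = a := rfl
    have h2 : hi (n := n) ⟨a.1, by omega⟩ = b := Fin.ext (by simp [hi, hb])
    rwa [sPerm, h1, h2] at this
  | succ d ih =>
    intro a b ha hb
    let c : Fin n := ⟨a.1 + d + 1, by omega⟩
    have h1 := ih a c ha rfl
    have h2 : Commute (ψ (Equiv.swap c b)) t := by
      have := hs ⟨c.1, by simp only [c]; omega⟩ (by simp [c]; omega)
      have h1 : lo (n := n) ⟨c.1, by simp only [c]; omega⟩ = c := rfl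
      have h2 : hi (n := n) ⟨c.1, by simp only [c]; omega⟩ = b := Fin.ext (by simp [hi, hb, c]; omega)
      rwa [sPerm, h1, h2] at this
    have hac : a ≠ c := by intro h; have := congrArg Fin.val h; simp [c] at this; omega
    have hab : a ≠ b := by intro h; have := congrArg Fin.val h; omega
    have : Equiv.swap a b = Equiv.swap c b * Equiv.swap a c * Equiv.swap c b := by
      have hbc : b ≠ c := by intro h; have := congrArg Fin.val h; simp [c] at this; omega

      have := Equiv.swap_mul_swap_mul_swap (x := a) (y := c) (z := b) hac hab
      rw [this, Equiv.swap_comm]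
    rw [this, map_mul, map_mul]
    exact (h2.mul_left h1).mul_left h2

theorem conj_fix {n : ℕ} {M : Type*} [Monoid M] (ψ : Equiv.Perm (Fin n) →* M) (t : M)
    (hs : ∀ i : Fin (n - 1), 2 ≤ i.1 → Commute (ψ (sPerm i)) t)
    (u : Equiv.Perm (Fin n)) (hu : ∀ x : Fin n, x.1 < 2 → u x = x) : Commute (ψ u) t := by
  have hp : ∀ x : Fin n, 2 ≤ (u x).1 ↔ 2 ≤ x.1 := by
    intro x
    constructor
    · intro h
      by_contra h'
      rw [hu x (by omega)] at h
      omega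
    · intro h
      by_contra h'
      have := u.injective (hu (u x) (by omega))
      rw [this] at h'
      omega
  have key : ∀ f : Equiv.Perm {x : Fin n // 2 ≤ x.1},
      Commute (ψ (Equiv.Perm.ofSubtype f)) t := by
    intro f
    induction f using Equiv.Perm.swap_induction_on with
    | one => simp
    | swap_mul f x y hxy ih =>
      rw [map_mul, map_mul, Equiv.Perm.ofSubtype_swap_eq]
      refine Commute.mul_left ?_ ih
      have hne : x.1.1 ≠ y.1.1 := fun h => hxy (Subtype.ext (Fin.ext h))
      rcases lt_or_gt_of_ne hne with h | h
      · exact conj_swap ψ t hs (y.1.1 - x.1.1 - 1) _ _ x.2 (by omega)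
      · rw [Equiv.swap_comm]
        exact conj_swap ψ t hs (x.1.1 - y.1.1 - 1) _ _ y.2 (by omega)
  have h := key (u.subtypePerm hp)
  rwa [Equiv.Perm.ofSubtype_subtypePerm] at h
  intro x hx
  by_contra h
  exact hx (hu x (by omega))

theorem conj_eq {n : ℕ} {M : Type*} [Monoid M] (ψ : Equiv.Perm (Fin n) →* M) (t : M)
    (u v : Equiv.Perm (Fin n)) (h : Commute (ψ (u * v⁻¹)) t) :
    ψ u⁻¹ * t * ψ u = ψ v⁻¹ * t * ψ v := by
  have h1 : ψ u = ψ (u * v⁻¹) * ψ v := by rw [← map_mul]; simp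
  have h2 : ψ u⁻¹ * ψ (u * v⁻¹) = ψ v⁻¹ := by rw [← map_mul]; simp
  rw [h1, ← h2, mul_assoc, mul_assoc, mul_assoc, ← mul_assoc t, ← h.eq, mul_assoc]

theorem conj_commute {n : ℕ} {M : Type*} [Monoid M] (ψ : Equiv.Perm (Fin n) →* M) (t s : M)
    (u : Equiv.Perm (Fin n)) (h : Commute t s) :
    Commute (ψ u⁻¹ * t * ψ u) (ψ u⁻¹ * s * ψ u) := by
  have h1 : ∀ x, ψ u * (ψ u⁻¹ * x) = x := by intro x; rw [← mul_assoc, ← map_mul]; simp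
  simp only [Commute, SemiconjBy, mul_assoc, h1]
  rw [← mul_assoc t, h.eq, mul_assoc]

theorem IT_conjugates_commute (n : ℕ) (hn : 2 ≤ n)
    (ψ : Equiv.Perm (Fin n) →* ITMonoid n)
    (hψ : ∀ i : Fin (n - 1), ψ (sPerm i) = σI i)
    (w v : Equiv.Perm (Fin n)) :
    Commute (ψ w⁻¹ * τI ⟨0, by omega⟩ * ψ w) (ψ v⁻¹ * τI ⟨0, by omega⟩ * ψ v) := by
  have hs : ∀ i : Fin (n - 1), 2 ≤ i.1 → Commute (ψ (sPerm i)) (τI ⟨0, by omega⟩) := by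
    intro i hi
    rw [hψ]
    exact (rel_eq (ITRel.tau_sigma_comm ⟨0, by omega⟩ i
      (by simp only [Nat.dist]; omega))).symm
  have hs0 : Commute (ψ (sPerm ⟨0, by omega⟩)) (τI (n := n) ⟨0, by omega⟩) := by
    rw [hψ]
    exact (rel_eq (ITRel.sigma_tau ⟨0, by omega⟩)).trans
      (rel_eq (ITRel.tau_sigma ⟨0, by omega⟩)).symm
  have hσ : ∀ i : Fin (n-1), ∀ x : ITMonoid n, σI i * (σI i * x) = x := by
    intro i x
    rw [← mul_assoc]
    have : σI i * σI i = (1 : ITMonoid n) := rel_eq (ITRel.sigma_sq i)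
    rw [this, one_mul]
  have hσ' : ∀ i : Fin (n-1), σI i * σI i = (1 : ITMonoid n) :=
    fun i => rel_eq (ITRel.sigma_sq i)
  -- moving lemma
  have hmove : ∀ i j : Fin (n-1), Nat.dist i.1 j.1 = 1 →
      ψ (sPerm j * sPerm i)⁻¹ * τI i * ψ (sPerm j * sPerm i) = τI j := by
    intro i j hij
    have h : σI i * τI j * σI i = σI j * τI i * σI j := rel_eq (ITRel.sigma_tau_sigma i j hij)
    have hinv : ∀ i : Fin (n-1), (sPerm i)⁻¹ = sPerm i := fun i => by simp [sPerm]
    rw [mul_inv_rev, hinv, hinv, map_mul, map_mul, hψ, hψ]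
    calc σI i * σI j * τI i * (σI j * σI i) = σI i * (σI j * τI i * σI j) * σI i := by
          simp only [mul_assoc]
      _ = τI j := by rw [← h]; simp only [mul_assoc, hσ, hσ', mul_one]
  set t : ITMonoid n := τI ⟨0, by omega⟩ with ht
  let p0 : Fin n := ⟨0, by omega⟩
  let p1 : Fin n := ⟨1, by omega⟩
  -- E depends on the pair only
  have hE : ∀ u r : Equiv.Perm (Fin n), u (r⁻¹ p0) = p0 → u (r⁻¹ p1) = p1 →
      ψ u⁻¹ * t * ψ u = ψ r⁻¹ * t * ψ r := by
    intro u r h0 h1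
    apply conj_eq
    apply conj_fix ψ t hs
    intro x hx
    obtain h | h : x = p0 ∨ x = p1 := by
      rcases x with ⟨x, hx'⟩
      simp only [p0, p1, Fin.mk.injEq]
      simp only at hx
      omega
    · rw [h]; exact h0
    · rw [h]; exact h1
  have hS : ∀ u : Equiv.Perm (Fin n), 
      ψ (sPerm ⟨0, by omega⟩ * u)⁻¹ * t * ψ (sPerm ⟨0, by omega⟩ * u) = ψ u⁻¹ * t * ψ u := by
    intro u
    apply conj_eq
    simpa using hs0
  have s0p0 : sPerm (n := n) ⟨0, by omega⟩ p0 = p1 := Equiv.swap_apply_left _ _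
  have s0p1 : sPerm (n := n) ⟨0, by omega⟩ p1 = p0 := Equiv.swap_apply_right _ _
  have s0inv : (sPerm (n := n) ⟨0, by omega⟩)⁻¹ = sPerm ⟨0, by omega⟩ := by simp [sPerm]
  have hE' : ∀ u r : Equiv.Perm (Fin n), u (r⁻¹ p0) = p1 → u (r⁻¹ p1) = p0 →
      ψ u⁻¹ * t * ψ u = ψ r⁻¹ * t * ψ r := by
    intro u r h0 h1
    rw [← hS u]
    apply hE
    · rw [Equiv.Perm.mul_apply, h0, s0p1]
    · rw [Equiv.Perm.mul_apply, h1, s0p0]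
  have p01 : p0 ≠ p1 := by simp [p0, p1]
  -- one shared point
  have hone : ∀ w v : Equiv.Perm (Fin n), w⁻¹ p1 = v⁻¹ p0 → w⁻¹ p0 ≠ v⁻¹ p1 →
      Commute (ψ w⁻¹ * t * ψ w) (ψ v⁻¹ * t * ψ v) := by
    intro w v h1 h2
    have a1 : w⁻¹ p0 ≠ w⁻¹ p1 := fun h => p01 (w⁻¹.injective h)
    have a2 : v⁻¹ p0 ≠ v⁻¹ p1 := fun h => p01 (v⁻¹.injective h)
    have hinj : Function.Injective ![w⁻¹ p0, v⁻¹ p0, v⁻¹ p1] := by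
      rw [h1] at a1
      exact inj3 a1 a2 h2
    have hk : 3 ≤ n := by simpa using Fintype.card_le_of_injective _ hinj
    obtain ⟨g, hg⟩ := exists_perm_of_inj _ hinj hk
    have g0 := hg 0
    have g1 := hg 1
    have g2 := hg 2
    simp only [Matrix.cons_val] at g0 g1 g2
    have e1 := hE g w (by rw [g0]; rfl) (by rw [h1, g1]; rfl)
    have e2 := hE (sPerm ⟨1, by omega⟩ * sPerm ⟨0, by omega⟩ * g) v
      (by simp only [Equiv.Perm.mul_apply, g1, sPerm, lo, hi, p0, Equiv.swap_apply_def,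
            Fin.ext_iff, Fin.val_castLE]; simp)
      (by simp only [Equiv.Perm.mul_apply, g2, sPerm, lo, hi, p1, Equiv.swap_apply_def,
            Fin.ext_iff, Fin.val_castLE]; simp)
    rw [← e1, ← e2]
    have := hmove ⟨0, by omega⟩ ⟨1, by omega⟩ (by simp [Nat.dist])
    rw [mul_inv_rev _ g, map_mul, map_mul _ _ g]
    have e3 : ∀ a b c d : ITMonoid n, a * b * t * (c * d) = a * (b * t * c) * d := by
      intros; simp only [mul_assoc]
    rw [e3, this]
    apply conj_commute
    exact rel_eq (ITRel.tau_comm _ _ (by simp))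
  have hzero : ∀ w v : Equiv.Perm (Fin n), w⁻¹ p0 ≠ v⁻¹ p0 → w⁻¹ p0 ≠ v⁻¹ p1 →
      w⁻¹ p1 ≠ v⁻¹ p0 → w⁻¹ p1 ≠ v⁻¹ p1 →
      Commute (ψ w⁻¹ * t * ψ w) (ψ v⁻¹ * t * ψ v) := by
    intro w v b1 b2 b3 b4
    have a1 : w⁻¹ p0 ≠ w⁻¹ p1 := fun h => p01 (w⁻¹.injective h)
    have a2 : v⁻¹ p0 ≠ v⁻¹ p1 := fun h => p01 (v⁻¹.injective h)
    have hinj : Function.Injective ![w⁻¹ p0, w⁻¹ p1, v⁻¹ p0, v⁻¹ p1] := by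
      exact inj4 a1 a2 b1 b2 b3 b4
    have hk : 4 ≤ n := by simpa using Fintype.card_le_of_injective _ hinj
    obtain ⟨g, hg⟩ := exists_perm_of_inj _ hinj hk
    have g0 := hg 0
    have g1 := hg 1
    have g2 := hg 2
    have g3 := hg 3
    simp only [Matrix.cons_val] at g0 g1 g2 g3
    have e1 := hE g w (by rw [g0]; rfl) (by rw [g1]; rfl)
    have e2 := hE ((sPerm ⟨1, by omega⟩ * sPerm ⟨0, by omega⟩) *
        ((sPerm ⟨2, by omega⟩ * sPerm ⟨1, by omega⟩) * g)) v
      (by simp only [Equiv.Perm.mul_apply, g2, sPerm, lo, hi, p0, Equiv.swap_apply_def,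
            Fin.ext_iff, Fin.val_castLE]; simp)
      (by simp only [Equiv.Perm.mul_apply, g3, sPerm, lo, hi, p1, Equiv.swap_apply_def,
            Fin.ext_iff, Fin.val_castLE]; simp)
    rw [← e1, ← e2]
    have m1 := hmove ⟨0, by omega⟩ ⟨1, by omega⟩ (by simp [Nat.dist])
    have m2 := hmove ⟨1, by omega⟩ ⟨2, by omega⟩ (by simp [Nat.dist])
    have e3 : ∀ (s : ITMonoid n) (x y : Equiv.Perm (Fin n)),
        ψ (x * y)⁻¹ * s * ψ (x * y) = ψ y⁻¹ * (ψ x⁻¹ * s * ψ x) * ψ y := by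
      intro s x y
      rw [mul_inv_rev, map_mul, map_mul]
      simp only [mul_assoc]
    rw [e3 _ _ (_ * g), m1, e3 _ _ g, m2]
    apply conj_commute
    exact rel_eq (ITRel.tau_comm _ _ (by simp))
  have q0 : ∀ u : Equiv.Perm (Fin n), (sPerm (n := n) ⟨0, by omega⟩ * u : Equiv.Perm (Fin n))⁻¹ p0 = u⁻¹ p1 := by
    intro u; rw [mul_inv_rev, Equiv.Perm.mul_apply, s0inv, s0p0]
  have q1 : ∀ u : Equiv.Perm (Fin n), (sPerm (n := n) ⟨0, by omega⟩ * u : Equiv.Perm (Fin n))⁻¹ p1 = u⁻¹ p0 := by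
    intro u; rw [mul_inv_rev, Equiv.Perm.mul_apply, s0inv, s0p1]
  have r : ∀ x, w (w⁻¹ x) = x := by simp
  by_cases c00 : w⁻¹ p0 = v⁻¹ p0
  · by_cases c11 : w⁻¹ p1 = v⁻¹ p1
    · rw [hE w v (by rw [← c00, r]) (by rw [← c11, r])]
    · rw [← hS w]
      exact hone _ _ (by rw [q1, c00]) (by rwa [q0])
  by_cases c11 : w⁻¹ p1 = v⁻¹ p1
  · rw [← hS v]
    exact hone _ _ (by rw [q0, c11]) (by rwa [q1])
  by_cases c01 : w⁻¹ p0 = v⁻¹ p1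
  · by_cases c10 : w⁻¹ p1 = v⁻¹ p0
    · rw [hE' w v (by rw [← c10, r]) (by rw [← c01, r])]
    · exact (hone v w c01.symm (fun h => c10 h.symm)).symm
  by_cases c10 : w⁻¹ p1 = v⁻¹ p0
  · exact hone _ _ c10 c01
  exact hzero w v c00 c01 c10 c11
end

section
/- Let ψ : Perm(Fin n) → T be the monoid homomorphism with ψ(s_i) = σ_i. Let i < j < k be elements of {1,…,n}, and let w₁, w₂, w₃ ∈ Perm(Fin n) be any permutations with w₁({1,2}) = {i,j}, w₂({1,2}) = {j,k}, w₃({1,2}) = {i,k}. Setting ε_{i,j} = ψ(w₁⁻¹)τ_1ψ(w₁), ε_{j,k} = ψ(w₂⁻¹)τ_1ψ(w₂), ε_{i,k} = ψ(w₃⁻¹)τ_1ψ(w₃), one has ε_{i,j}·ε_{j,k} = ε_{i,k}·ε_{j,k} = ε_{i,j}·ε_{i,k}. -/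
section helpers
variable {n : ℕ}

theorem IT_rel {x y : FreeMonoid (ITGen n)} (h : ITRel n x y) :
    PresentedMonoid.mk (ITRel n) x = PresentedMonoid.mk (ITRel n) y :=
  (Con.eq _).2 (ConGen.Rel.of _ _ h)

theorem IT_sq (i : Fin (n - 1)) : σI i * σI i = 1 := IT_rel (ITRel.sigma_sq i)
theorem IT_tc (i j : Fin (n - 1)) (h : i ≠ j) : τI i * τI j = τI j * τI i :=
  IT_rel (ITRel.tau_comm i j h)
theorem IT_ts (i : Fin (n - 1)) : τI i * σI i = τI i := IT_rel (ITRel.tau_sigma i)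
theorem IT_st (i : Fin (n - 1)) : σI i * τI i = τI i := IT_rel (ITRel.sigma_tau i)
theorem IT_tsc (i j : Fin (n - 1)) (h : 1 < Nat.dist i.1 j.1) :
    τI i * σI j = σI j * τI i := IT_rel (ITRel.tau_sigma_comm i j h)
theorem IT_sts (i j : Fin (n - 1)) (h : Nat.dist i.1 j.1 = 1) :
    σI i * τI j * σI i = σI j * τI i * σI j := IT_rel (ITRel.sigma_tau_sigma i j h)
theorem IT_tst (i j : Fin (n - 1)) (h : Nat.dist i.1 j.1 = 1) :
    τI i * σI j * τI i = τI i * τI j := IT_rel (ITRel.tau_sigma_tau i j h)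

theorem IT_swap_comm (hn : 3 ≤ n) (ψ : Equiv.Perm (Fin n) →* ITMonoid n)
    (hψ : ∀ i : Fin (n - 1), ψ (sPerm i) = σI i) (d : ℕ) :
    ∀ (x y : Fin n), 2 ≤ x.1 → y.1 = x.1 + d + 1 →
      Commute (τI ⟨0, by omega⟩) (ψ (Equiv.swap x y)) := by
  induction d with
  | zero =>
    intro x y hx hy
    have hy2 := y.2
    have : Equiv.swap x y = sPerm ⟨x.1, by omega⟩ := by
      unfold sPerm
      congr 1
      exact Fin.ext (by simpa [hi] using hy)
    rw [this, hψ]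
    exact IT_tsc _ _ (by simp [Nat.dist]; omega)
  | succ d ih =>
    intro x y hx hy
    have hy2 := y.2
    let z : Fin n := ⟨x.1 + d + 1, by omega⟩
    have hxz : x ≠ z := fun h => by have := congrArg Fin.val h; simp [z] at this; omega
    have hxy : x ≠ y := fun h => by have := congrArg Fin.val h; omega
    have e : Equiv.swap x y = Equiv.swap z y * Equiv.swap x z * Equiv.swap z y := by
      rw [Equiv.swap_mul_swap_mul_swap hxz hxy, Equiv.swap_comm]
    have h1 := ih x z hx rfl
    have h2 : Commute (τI ⟨0, by omega⟩) (ψ (Equiv.swap z y)) := by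
      have : Equiv.swap z y = sPerm ⟨x.1 + d + 1, by omega⟩ := by
        unfold sPerm
        congr 1
        exact Fin.ext (by simp [hi]; omega)
      rw [this, hψ]
      exact IT_tsc _ _ (by simp [Nat.dist]; omega)
    rw [e, map_mul, map_mul]
    exact (h2.mul_right h1).mul_right h2

theorem IT_fix_comm (hn : 3 ≤ n) (ψ : Equiv.Perm (Fin n) →* ITMonoid n)
    (hψ : ∀ i : Fin (n - 1), ψ (sPerm i) = σI i) (u : Equiv.Perm (Fin n))
    (h0 : u ⟨0, by omega⟩ = ⟨0, by omega⟩) (h1 : u ⟨1, by omega⟩ = ⟨1, by omega⟩) :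
    Commute (τI ⟨0, by omega⟩) (ψ u) := by
  have key : ∀ v : Equiv.Perm {x : Fin n // 2 ≤ x.1},
      Commute (τI ⟨0, by omega⟩) (ψ (Equiv.Perm.ofSubtype v)) := by
    intro v
    induction v using Equiv.Perm.swap_induction_on with
    | one => simp
    | swap_mul f x y hxy ih =>
      rw [map_mul, map_mul]
      refine Commute.mul_right ?_ ih
      rw [Equiv.Perm.ofSubtype_swap_eq]
      have hne : x.1.1 ≠ y.1.1 := fun h => hxy (Subtype.ext (Fin.ext h))
      rcases lt_or_gt_of_ne hne with h | h
      · exact IT_swap_comm hn ψ hψ (y.1.1 - x.1.1 - 1) _ _ x.2 (by omega)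
      · rw [Equiv.swap_comm]
        exact IT_swap_comm hn ψ hψ (x.1.1 - y.1.1 - 1) _ _ y.2 (by omega)
  have hv : ∀ x : Fin n, ¬ 2 ≤ x.1 → u x = x := by
    intro x hx
    have : x = ⟨0, by omega⟩ ∨ x = ⟨1, by omega⟩ := by
      simp only [Fin.ext_iff]; omega
    rcases this with h | h <;> rw [h] <;> assumption
  have hp : ∀ x : Fin n, 2 ≤ (u x).1 ↔ 2 ≤ x.1 := by
    intro x
    constructor
    · intro h
      by_contra hx
      rw [hv x hx] at h
      exact hx h
    · intro h
      by_contra hx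
      have := u.injective (hv _ hx)
      rw [this] at hx
      exact hx h
  have := key (u.subtypePerm hp)
  rwa [Equiv.Perm.ofSubtype_subtypePerm] at this
  intro x hx
  by_contra h
  exact hx (hv x h)

theorem IT_stab_comm (hn : 3 ≤ n) (ψ : Equiv.Perm (Fin n) →* ITMonoid n)
    (hψ : ∀ i : Fin (n - 1), ψ (sPerm i) = σI i) (u : Equiv.Perm (Fin n))
    (h : ⇑u '' ({⟨0, by omega⟩, ⟨1, by omega⟩} : Set (Fin n)) =
      {⟨0, by omega⟩, ⟨1, by omega⟩}) :
    Commute (τI ⟨0, by omega⟩) (ψ u) := by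
  rw [Set.image_pair, Set.pair_eq_pair_iff] at h
  rcases h with ⟨h0, h1⟩ | ⟨h0, h1⟩
  · exact IT_fix_comm hn ψ hψ u h0 h1
  · have e : u = sPerm ⟨0, by omega⟩ * (sPerm ⟨0, by omega⟩ * u) := by
      simp [sPerm]
    rw [e, map_mul, hψ]
    refine Commute.mul_right ((IT_ts _).trans (IT_st _).symm) ?_
    apply IT_fix_comm hn ψ hψ
    · simp only [Equiv.Perm.mul_apply, h0]; exact Equiv.swap_apply_right _ _
    · simp only [Equiv.Perm.mul_apply, h1]; exact Equiv.swap_apply_left _ _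

theorem IT_key (hn : 3 ≤ n) (ψ : Equiv.Perm (Fin n) →* ITMonoid n)
    (hψ : ∀ i : Fin (n - 1), ψ (sPerm i) = σI i) (w v : Equiv.Perm (Fin n))
    (h : ⇑w⁻¹ '' ({⟨0, by omega⟩, ⟨1, by omega⟩} : Set (Fin n)) =
      ⇑v⁻¹ '' ({⟨0, by omega⟩, ⟨1, by omega⟩} : Set (Fin n))) :
    ψ w⁻¹ * τI ⟨0, by omega⟩ * ψ w = ψ v⁻¹ * τI ⟨0, by omega⟩ * ψ v := by
  have hc := IT_stab_comm hn ψ hψ (w * v⁻¹) (by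
    rw [Equiv.Perm.coe_mul, Set.image_comp, ← h, ← Set.image_comp, ← Equiv.Perm.coe_mul]
    simp)
  have e1 : ψ w = ψ (w * v⁻¹) * ψ v := by rw [← map_mul]; simp
  have e2 : ψ w⁻¹ * ψ (w * v⁻¹) = ψ v⁻¹ := by rw [← map_mul]; simp
  rw [e1, ← mul_assoc, mul_assoc (ψ w⁻¹), hc.eq, ← mul_assoc, e2]

theorem IT_exists (hn : 3 ≤ n) (a b c : Fin n) (hab : a ≠ b) (hbc : b ≠ c) (hac : a ≠ c) :
    ∃ g : Equiv.Perm (Fin n), g⁻¹ ⟨0, by omega⟩ = a ∧ g⁻¹ ⟨1, by omega⟩ = b ∧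
      g⁻¹ ⟨2, by omega⟩ = c := by
  obtain ⟨g1, p1⟩ : ∃ g : Equiv.Perm (Fin n), g a = ⟨0, by omega⟩ :=
    ⟨Equiv.swap a ⟨0, by omega⟩, Equiv.swap_apply_left _ _⟩
  obtain ⟨g2, p2, q2⟩ : ∃ g : Equiv.Perm (Fin n), g a = ⟨0, by omega⟩ ∧ g b = ⟨1, by omega⟩ := by
    refine ⟨Equiv.swap (g1 b) ⟨1, by omega⟩ * g1, ?_, Equiv.swap_apply_left _ _⟩
    rw [Equiv.Perm.mul_apply, Equiv.swap_apply_of_ne_of_ne (g1.injective.ne hab), p1]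
    rw [p1]; simp
  refine ⟨Equiv.swap (g2 c) ⟨2, by omega⟩ * g2, ?_, ?_, ?_⟩ <;> rw [Equiv.Perm.inv_eq_iff_eq]
  · rw [Equiv.Perm.mul_apply, Equiv.swap_apply_of_ne_of_ne (g2.injective.ne hac), p2]
    rw [p2]; simp
  · rw [Equiv.Perm.mul_apply, Equiv.swap_apply_of_ne_of_ne (g2.injective.ne hbc), q2]
    rw [q2]; simp
  · exact (Equiv.swap_apply_left _ _).symm

end helpers

/-- Lemma `lemma104` of Kudryavtseva–Mazorchuk: for `i < j < k` in `{1, …, n}` one has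
`ε_{i,j} ε_{j,k} = ε_{i,k} ε_{j,k} = ε_{i,j} ε_{i,k}`, where `ε_{i,j} = ψ(w⁻¹) τ_1 ψ(w)`
for any `w` with `w({1,2}) = {i,j}`.  (The symmetric group acts on `{1, …, n}` on the
*right*, so `w({1,2})` is the image of `{1,2}` under `⇑w⁻¹` in terms of Mathlib's
left-composition convention for `Equiv.Perm`.) -/
theorem IT_eps_relations (n : ℕ) (hn : 3 ≤ n)
    (ψ : Equiv.Perm (Fin n) →* ITMonoid n)
    (hψ : ∀ i : Fin (n - 1), ψ (sPerm i) = σI i)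
    (a b c : Fin n) (hab : a < b) (hbc : b < c)
    (w₁ w₂ w₃ : Equiv.Perm (Fin n))
    (h₁ : ⇑w₁⁻¹ '' ({⟨0, by omega⟩, ⟨1, by omega⟩} : Set (Fin n)) = {a, b})
    (h₂ : ⇑w₂⁻¹ '' ({⟨0, by omega⟩, ⟨1, by omega⟩} : Set (Fin n)) = {b, c})
    (h₃ : ⇑w₃⁻¹ '' ({⟨0, by omega⟩, ⟨1, by omega⟩} : Set (Fin n)) = {a, c}) :
    (ψ w₁⁻¹ * τI ⟨0, by omega⟩ * ψ w₁) * (ψ w₂⁻¹ * τI ⟨0, by omega⟩ * ψ w₂) =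
        (ψ w₃⁻¹ * τI ⟨0, by omega⟩ * ψ w₃) * (ψ w₂⁻¹ * τI ⟨0, by omega⟩ * ψ w₂) ∧
      (ψ w₁⁻¹ * τI ⟨0, by omega⟩ * ψ w₁) * (ψ w₂⁻¹ * τI ⟨0, by omega⟩ * ψ w₂) =
        (ψ w₁⁻¹ * τI ⟨0, by omega⟩ * ψ w₁) * (ψ w₃⁻¹ * τI ⟨0, by omega⟩ * ψ w₃) := by
  obtain ⟨g, ga, gb, gc⟩ := IT_exists hn a b c hab.ne hbc.ne (hab.trans hbc).ne
  have i0 : (sPerm (⟨0, by omega⟩ : Fin (n-1)))⁻¹ = sPerm ⟨0, by omega⟩ := Equiv.swap_inv _ _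
  have i1 : (sPerm (⟨1, by omega⟩ : Fin (n-1)))⁻¹ = sPerm ⟨1, by omega⟩ := Equiv.swap_inv _ _
  have a00 : sPerm (⟨0, by omega⟩ : Fin (n-1)) ⟨0, by omega⟩ = ⟨1, by omega⟩ :=
    Equiv.swap_apply_left _ _
  have a02 : sPerm (⟨0, by omega⟩ : Fin (n-1)) ⟨2, by omega⟩ = ⟨2, by omega⟩ :=
    Equiv.swap_apply_of_ne_of_ne (by simp [lo]) (by simp [hi])
  have a10 : sPerm (⟨1, by omega⟩ : Fin (n-1)) ⟨0, by omega⟩ = ⟨0, by omega⟩ :=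
    Equiv.swap_apply_of_ne_of_ne (by simp [lo]) (by simp [hi])
  have a11 : sPerm (⟨1, by omega⟩ : Fin (n-1)) ⟨1, by omega⟩ = ⟨2, by omega⟩ :=
    Equiv.swap_apply_left _ _
  have k1 := IT_key hn ψ hψ w₁ g (by rw [h₁, Set.image_pair, ga, gb])
  have k3 := IT_key hn ψ hψ w₃ (sPerm ⟨1, by omega⟩ * g) (by
    rw [h₃, Set.image_pair, mul_inv_rev, i1, Equiv.Perm.mul_apply, Equiv.Perm.mul_apply,
      a10, a11, ga, gc])
  have k2 := IT_key hn ψ hψ w₂ (sPerm ⟨1, by omega⟩ * (sPerm ⟨0, by omega⟩ * g)) (by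
    rw [h₂, Set.image_pair, mul_inv_rev, mul_inv_rev, i1, i0]
    simp only [Equiv.Perm.mul_apply]
    rw [a10, a11, a00, a02, gb, gc])
  rw [mul_inv_rev, i1] at k3
  rw [mul_inv_rev, mul_inv_rev, i1, i0] at k2
  simp only [map_mul, hψ] at k2 k3
  rw [k1, k2, k3]
  have hg : ψ g * ψ g⁻¹ = 1 := by rw [← map_mul]; simp
  generalize ψ g = G at *
  generalize ψ g⁻¹ = G' at *
  have r1 := IT_sts (⟨1, by omega⟩ : Fin (n-1)) ⟨0, by omega⟩ (by simp [Nat.dist])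
  have r2 := IT_tst (⟨0, by omega⟩ : Fin (n-1)) ⟨1, by omega⟩ (by simp [Nat.dist])
  have r3 := IT_tc (⟨0, by omega⟩ : Fin (n-1)) ⟨1, by omega⟩ (by simp)
  have r4 := IT_sq (⟨0, by omega⟩ : Fin (n-1))
  have r5 := IT_ts (⟨1, by omega⟩ : Fin (n-1))
  have r6 := IT_st (⟨1, by omega⟩ : Fin (n-1))
  generalize (σI ⟨0, by omega⟩ : ITMonoid n) = s at *
  generalize (σI ⟨1, by omega⟩ : ITMonoid n) = s' at *
  generalize (τI ⟨0, by omega⟩ : ITMonoid n) = t at *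
  generalize (τI ⟨1, by omega⟩ : ITMonoid n) = t' at *
  have e2 : G' * s * s' * t * (s' * (s * G)) = G' * t' * G := by
    calc _ = G' * s * (s' * t * s') * s * G := by simp only [mul_assoc]
      _ = G' * (s * s) * t' * (s * s) * G := by rw [r1]; simp only [mul_assoc]
      _ = _ := by rw [r4]; simp only [mul_one]
  have c : ∀ x y, G' * x * G * (G' * y * G) = G' * (x * y) * G := by
    intro x y
    calc _ = G' * x * (G * G') * y * G := by simp only [mul_assoc]
      _ = _ := by rw [hg]; simp only [mul_one, mul_assoc]
  have e3 : G' * s' * t * (s' * G) = G' * (s' * t * s') * G := by simp only [mul_assoc]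
  simp only [← mul_assoc] at e2 e3 c ⊢
  have d1 : s' * t * s' * t' = t * t' := by
    rw [mul_assoc, r6, mul_assoc, r3, ← mul_assoc, r6]
  have d2 : t * s' * t * s' = t * t' := by rw [r2, mul_assoc, r5]
  have c1 := c t t'
  have c2 := c (s' * t * s') t'
  have c3 := c t (s' * t * s')
  simp only [← mul_assoc] at c1 c2 c3
  have f : ∀ x y z : ITMonoid n, x = y → z * x = z * y := by intro x y z h; rw [h]
  have g1 := f _ _ (G' * t * G) e2
  have g2 := f _ _ (G' * s' * t * s' * G) e2
  simp only [← mul_assoc] at g1 g2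
  rw [g1, g2, c1, c2, c3]
  have m1 := congrArg (fun x => G' * x * G) d1
  have m2 := congrArg (fun x => G' * x * G) d2
  simp only [← mul_assoc] at m1 m2
  exact ⟨m1.symm, m2.symm⟩
end

section
/- The monoid T is finite, and its cardinality satisfies |T| ≤ Σ_{λ ⊢ n} (n!)² / Π_{i=1}^n (λ^{(i)}!·(i!)^{2λ^{(i)}}), where the sum is over all partitions λ of n and λ^{(i)} denotes the number of parts of λ equal to i (each quotient being an exact natural-number division). -/
set_option linter.unusedSectionVars false


namespace ITP

open Equiv

/-- Product of `k` descending generators starting with `u m`. -/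
def dd {G : Type*} [Group G] (u : ℕ → G) (m : ℕ) : ℕ → G
  | 0 => 1
  | k + 1 => dd u m k * u (m - k)

structure Cox {G : Type*} [Monoid G] (u : ℕ → G) (m : ℕ) : Prop where
  sq : ∀ i, i < m → u i * u i = 1
  comm : ∀ i j, i + 1 < j → j < m → u i * u j = u j * u i
  braid : ∀ i, i + 1 < m → u i * u (i + 1) * u i = u (i + 1) * u i * u (i + 1)

lemma dd_comm {G : Type*} [Group G] {u : ℕ → G} {m : ℕ} (h : Cox u (m + 1)) :
    ∀ k i, i + k < m → u i * dd u m k = dd u m k * u i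
  | 0, i, _ => by simp [dd]
  | k + 1, i, hi => by
      rw [dd, ← mul_assoc, dd_comm h k i (by omega), mul_assoc, mul_assoc,
        h.comm i (m - k) (by omega) (by omega)]

lemma dd_shift {G : Type*} [Group G] {u : ℕ → G} {m : ℕ} (h : Cox u (m + 1)) :
    ∀ k i, k ≤ m + 1 → i < m → m < i + k → dd u m k * u (i + 1) = u i * dd u m k
  | 0, i, _, h1, h2 => by omega
  | k + 1, i, hk, h1, h2 => by
      by_cases h3 : m < i + k
      · rw [dd, ← mul_assoc, ← dd_shift h k i (by omega) h1 h3, mul_assoc, mul_assoc,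
          h.comm (m - k) (i + 1) (by omega) (by omega)]
      · obtain ⟨k, rfl⟩ : ∃ k', k = k' + 1 := ⟨k - 1, by omega⟩
        have e1 : m - k = i + 1 := by omega
        have e2 : m - (k + 1) = i := by omega
        rw [dd, dd, e1, e2]
        rw [← mul_assoc, ← mul_assoc, dd_comm h k i (by omega)]
        have := h.braid i (by omega)
        simp only [mul_assoc] at this ⊢
        rw [this]

lemma cox_card {G : Type*} [Group G] (u : ℕ → G) : ∀ m, Cox u m →
    ((Subgroup.closure (u '' {i | i < m}) : Subgroup G) : Set G).Finite ∧
    ((Subgroup.closure (u '' {i | i < m}) : Subgroup G) : Set G).ncard ≤ (m + 1).factorial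
  | 0, _ => by simp
  | m + 1, h => by
      obtain ⟨f, c⟩ := cox_card u m ⟨fun i hi => h.sq i (by omega),
        fun i j hi hj => h.comm i j hi (by omega), fun i hi => h.braid i (by omega)⟩
      set H := Subgroup.closure (u '' {i | i < m}) with hH
      have hu : ∀ i, i < m → u i ∈ H := fun i hi => Subgroup.subset_closure ⟨i, hi, rfl⟩
      have key : ((Subgroup.closure (u '' {i | i < m + 1}) : Subgroup G) : Set G) ⊆
          (fun p : G × ℕ => p.1 * dd u m p.2) '' ((H : Set G) ×ˢ (Finset.range (m + 2) : Set ℕ)) := by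
        have step : ∀ x, x ∈ (fun p : G × ℕ => p.1 * dd u m p.2) ''
            ((H : Set G) ×ˢ (Finset.range (m + 2) : Set ℕ)) → ∀ i, i < m + 1 →
            x * u i ∈ (fun p : G × ℕ => p.1 * dd u m p.2) ''
            ((H : Set G) ×ˢ (Finset.range (m + 2) : Set ℕ)) := by
          rintro _ ⟨⟨g, k⟩, ⟨hg, hk⟩, rfl⟩ i hi
          simp only [SetLike.mem_coe, Finset.coe_range, Set.mem_Iio] at hg hk
          dsimp only
          rcases lt_trichotomy (i + k) m with h1 | h1 | h1
          · refine ⟨(g * u i, k), ⟨H.mul_mem hg (hu i (by omega)), by simpa using hk⟩, ?_⟩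
            simp only [mul_assoc, dd_comm h k i h1]
          · refine ⟨(g, k + 1), ⟨hg, by simp; omega⟩, ?_⟩
            simp only [dd, mul_assoc]
            rw [show m - k = i by omega]
          · by_cases h2 : i + k = m + 1
            · obtain ⟨k, rfl⟩ : ∃ k', k = k' + 1 := ⟨k - 1, by omega⟩
              refine ⟨(g, k), ⟨hg, by simp; omega⟩, ?_⟩
              simp only [dd, mul_assoc]
              rw [show m - k = i by omega, h.sq i hi, mul_one]
            · obtain ⟨i, rfl⟩ : ∃ i', i = i' + 1 := ⟨i - 1, by omega⟩
              refine ⟨(g * u i, k), ⟨H.mul_mem hg (hu i (by omega)), by simpa using hk⟩, ?_⟩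
              simp only [mul_assoc]
              rw [dd_shift h k i (by omega) (by omega) (by omega)]
        intro x hx
        induction hx using Subgroup.closure_induction_right with
        | one => exact ⟨(1, 0), ⟨H.one_mem, by simp⟩, by simp [dd]⟩
        | mul_right x y hx hy ih =>
          obtain ⟨i, hi, rfl⟩ := hy
          exact step x ih i hi
        | mul_inv_cancel x y hx hy ih =>
          obtain ⟨i, hi, rfl⟩ := hy
          rw [inv_eq_of_mul_eq_one_right (h.sq i hi)]
          exact step x ih i hi
      have fin := (f.prod (Finset.finite_toSet (Finset.range (m + 2)))).image
        (fun p : G × ℕ => p.1 * dd u m p.2)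
      refine ⟨fin.subset key, (Set.ncard_le_ncard key fin).trans ?_⟩
      refine (Set.ncard_image_le (f.prod (Finset.finite_toSet (Finset.range (m + 2))))).trans ?_
      rw [Set.ncard_prod, Set.ncard_coe_finset, Finset.card_range, Nat.factorial_succ (m + 1), mul_comm]
      exact Nat.mul_le_mul_left _ c

/-- adjacent transposition -/
def sw (m i : ℕ) : Perm (Fin (m + 1)) :=
  if h : i < m then swap ⟨i, by omega⟩ ⟨i + 1, by omega⟩ else 1

lemma sw_cox (m : ℕ) : Cox (sw m) m where
  sq i hi := by simp only [sw, hi, dif_pos, swap_mul_self]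
  comm i j hi hj := by
    have : i < m := by omega
    simp only [sw, hj, this, dif_pos]
    refine Equiv.Perm.Disjoint.commute ?_
    rw [Equiv.Perm.disjoint_iff_disjoint_support, Equiv.Perm.support_swap (by simp),
      Equiv.Perm.support_swap (by simp)]
    simp
    omega
  braid i hi := by
    have : i < m := by omega
    simp only [sw, hi, this, dif_pos]
    rw [Equiv.swap_mul_swap_mul_swap (by simp) (by simp; omega),
      Equiv.swap_comm (⟨i, _⟩ : Fin (m + 1)) ⟨i + 1, _⟩,
      Equiv.swap_comm (⟨i + 1, _⟩ : Fin (m + 1)) ⟨i + 1 + 1, _⟩,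
      Equiv.swap_mul_swap_mul_swap (by simp) (by simp; omega), Equiv.swap_comm]

lemma sw_closure (m : ℕ) : Subgroup.closure (sw m '' {i | i < m}) = ⊤ := by
  have := Equiv.Perm.mclosure_swap_castSucc_succ m
  rw [eq_top_iff, ← Subgroup.toSubmonoid_le, Subgroup.top_toSubmonoid, ← this,
    Submonoid.closure_le]
  rintro _ ⟨i, rfl⟩
  refine Subgroup.subset_closure ⟨i, i.2, ?_⟩
  simp [sw]; rfl

lemma cox_hom {G : Type*} [Group G] (u : ℕ → G) (m : ℕ) (h : Cox u m) :
    ∃ φ : Perm (Fin (m + 1)) →* G, ∀ i, i < m → φ (sw m i) = u i := by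
  let v : ℕ → G × Perm (Fin (m + 1)) := fun i => (u i, sw m i)
  have hs := sw_cox m
  have hv : Cox v m := ⟨fun i hi => by simp [v, h.sq i hi, hs.sq i hi],
    fun i j hi hj => by simp [v, h.comm i j hi hj, hs.comm i j hi hj],
    fun i hi => by simp [v, h.braid i hi, hs.braid i hi]⟩
  obtain ⟨f, c⟩ := cox_card v m hv
  set K := Subgroup.closure (v '' {i | i < m}) with hK
  let π : K →* Perm (Fin (m + 1)) := (MonoidHom.snd G _).comp K.subtype
  have hvK : ∀ i, i < m → v i ∈ K := fun i hi => Subgroup.subset_closure ⟨i, hi, rfl⟩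
  have hsurj : Function.Surjective π := by
    rw [← MonoidHom.range_eq_top, eq_top_iff, ← sw_closure m, Subgroup.closure_le]
    rintro _ ⟨i, hi, rfl⟩
    exact ⟨⟨v i, hvK i hi⟩, rfl⟩
  have : Finite K := f
  have hb : Function.Bijective π := by
    refine (Nat.bijective_iff_surjective_and_card π).2 ⟨hsurj, le_antisymm ?_
      (Nat.card_le_card_of_surjective π hsurj)⟩
    rw [Nat.card_perm, Nat.card_fin]
    exact c
  let E := MulEquiv.ofBijective π hb
  refine ⟨(MonoidHom.fst G _).comp (K.subtype.comp E.symm.toMonoidHom), fun i hi => ?_⟩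
  have : E.symm (sw m i) = ⟨v i, hvK i hi⟩ := by
    rw [MulEquiv.symm_apply_eq]; rfl
  simp [this, v]

lemma swapgen {α ι : Type*} [Fintype α] [DecidableEq α] (f : α → ι) (C : Submonoid (Perm α))
    (hC : ∀ a b, f a = f b → swap a b ∈ C) :
    ∀ (N : ℕ) (h : Perm α), h.support.card ≤ N → (∀ x, f (h x) = f x) → h ∈ C := by
  intro N
  induction N with
  | zero =>
    intro h h0 _
    have : h = 1 := by
      rw [← Equiv.Perm.support_eq_empty_iff, ← Finset.card_eq_zero]; omega
    rw [this]; exact C.one_mem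
  | succ N ih =>
    intro h h0 hf
    by_cases h1 : ∀ x, h x = x
    · have : h = 1 := Equiv.ext h1
      rw [this]; exact C.one_mem
    · push Not at h1
      obtain ⟨a, ha⟩ := h1
      have h2 := Equiv.Perm.card_support_swap_mul ha
      have h3 : swap a (h a) * h ∈ C := by
        refine ih _ (by omega) fun x => ?_
        rw [Equiv.Perm.mul_apply, Equiv.swap_apply_def]
        split_ifs with h4 h5
        · rw [← hf x, h4, hf a]
        · rw [← hf x, h5, hf a]
        · exact hf x
      have h4 := C.mul_mem (hC a (h a) (hf a).symm) h3
      rwa [← mul_assoc, swap_mul_self, one_mul] at h4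

structure Sys {M : Type*} [Monoid M] (s t : ℕ → M) (m : ℕ) : Prop where
  cox : Cox s m
  tt : ∀ i, i < m → t i * t i = t i
  tc : ∀ i j, i < m → j < m → i ≠ j → t i * t j = t j * t i
  ts : ∀ i, i < m → t i * s i = t i
  st : ∀ i, i < m → s i * t i = t i
  tsc : ∀ j, j < m → 1 < j → t 0 * s j = s j * t 0
  sts : ∀ i, i + 1 < m → s i * t (i + 1) * s i = s (i + 1) * t i * s (i + 1)
  tst : ∀ i, i + 1 < m → t i * s (i + 1) * t i = t i * t (i + 1)

structure ESys {M α : Type*} [Monoid M] [DecidableEq α] (φ : Perm α →* M) (e : α → α → M) :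
    Prop where
  refl : ∀ a, e a a = 1
  idem : ∀ a b, e a b * e a b = e a b
  symm : ∀ a b, e a b = e b a
  comm : ∀ a b c d, e a b * e c d = e c d * e a b
  conj : ∀ g a b, φ g * e a b = e (g a) (g b) * φ g
  trans : ∀ a b c, e a b * e b c = e a b * e a c
  swap : ∀ a b, e a b * φ (swap a b) = e a b

/-- points -/
def P (m i : ℕ) : Fin (m + 1) := Fin.ofNat (m + 1) i

lemma P_val {m i : ℕ} (h : i ≤ m) : (P m i).1 = i := by
  simp [P]; omega

lemma P_ne {m i j : ℕ} (hi : i ≤ m) (hj : j ≤ m) (h : i ≠ j) : P m i ≠ P m j := by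
  intro h'; apply h; rw [← P_val hi, ← P_val hj, h']

lemma sw_eq {m i : ℕ} (h : i < m) : sw m i = swap (P m i) (P m (i + 1)) := by
  rw [sw, dif_pos h]
  congr 1 <;> ext <;> rw [P_val (by omega)]

lemma exists_perm {m k : ℕ} (f : Fin k → Fin (m + 1)) (hf : Function.Injective f) :
    k ≤ m + 1 ∧ ∃ g : Perm (Fin (m + 1)), ∀ i : Fin k, g (P m i) = f i := by
  have hk : k ≤ m + 1 := by simpa using Fintype.card_le_of_injective f hf
  refine ⟨hk, ?_⟩
  obtain ⟨σ, hσ⟩ := Equiv.Perm.exists_extending_pair (fun i : Fin k => P m i) f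
    (fun i j h => by
      by_contra h'
      exact P_ne (by omega) (by omega) (fun h'' => h' (Fin.ext h'')) h) hf
  exact ⟨σ, fun i => by exact hσ i⟩

section
variable {M : Type*} [Monoid M] {s t : ℕ → M} {m : ℕ} {φ : Perm (Fin (m + 1)) →* M}

lemma swap_comm_t (h : Sys s t m) (hφ : ∀ i, i < m → φ (sw m i) = s i) :
    ∀ (b a : ℕ), 1 < a → a < b → b ≤ m → φ (swap (P m a) (P m b)) * t 0 =
      t 0 * φ (swap (P m a) (P m b)) := by
  intro b
  induction b with
  | zero => intro a _ h2; omega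
  | succ b ih =>
    intro a h1 h2 h3
    have hb : φ (swap (P m b) (P m (b + 1))) = s b := by rw [← sw_eq (by omega), hφ b (by omega)]
    by_cases h4 : a = b
    · subst h4
      rw [hb, h.tsc a (by omega) (by omega)]
    · have h5 : swap (P m a) (P m (b + 1)) =
          swap (P m b) (P m (b + 1)) * swap (P m a) (P m b) * swap (P m b) (P m (b + 1)) := by
        rw [Equiv.swap_mul_swap_mul_swap, swap_comm]
        · exact P_ne (by omega) (by omega) (by omega)
        · exact P_ne (by omega) (by omega) (by omega)
      rw [h5, map_mul, map_mul, hb]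
      have i1 := ih a h1 (by omega) (by omega)
      have i2 := h.tsc b (by omega) (by omega)
      rw [mul_assoc, ← i2, mul_assoc, ← mul_assoc _ (t 0), i1, ← mul_assoc, ← mul_assoc, ← i2]
      simp only [mul_assoc]

lemma stab0 (hm : 0 < m) (h : Sys s t m) (hφ : ∀ i, i < m → φ (sw m i) = s i)
    (g : Perm (Fin (m + 1))) (h0 : g (P m 0) = P m 0) (h1 : g (P m 1) = P m 1) :
    φ g * t 0 = t 0 * φ g := by
  have key := swapgen (fun x : Fin (m + 1) => min x.1 2)
    ((Submonoid.centralizer {t 0}).comap φ) ?_ _ g le_rfl ?_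
  · simpa [Submonoid.mem_centralizer_iff, eq_comm] using key
  · have main : ∀ a b : Fin (m + 1), a.1 < b.1 → min a.1 2 = min b.1 2 →
        swap a b ∈ (Submonoid.centralizer {t 0}).comap φ := by
      intro a b hab hh
      have ha : a = P m a.1 := Fin.ext (P_val (by omega)).symm
      have hb : b = P m b.1 := Fin.ext (P_val (by omega)).symm
      simp only [Submonoid.mem_comap, Submonoid.mem_centralizer_iff, Set.mem_singleton_iff,
        forall_eq]
      rw [ha, hb]
      exact (swap_comm_t h hφ b.1 a.1 (by omega) hab (by omega)).symm
    intro a b hab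
    rcases lt_trichotomy a.1 b.1 with h2 | h2 | h2
    · exact main a b h2 hab
    · rw [Fin.ext h2, swap_self]
      exact Submonoid.one_mem _
    · rw [swap_comm]
      exact main b a h2 hab.symm
  · intro x
    have p0 := P_val (m := m) (i := 0) (by omega)
    have p1 := P_val (m := m) (i := 1) (by omega)
    have ev : ∀ j, g (P m j) = P m j → ((g x).1 = (P m j).1 ↔ x.1 = (P m j).1) := by
      intro j hj
      rw [← Fin.ext_iff, ← Fin.ext_iff]
      conv_lhs => rw [← hj]
      exact g.injective.eq_iff
    have e0 := ev 0 h0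
    have e1 := ev 1 h1
    rw [p0] at e0
    rw [p1] at e1
    omega

lemma phi_inv_mul (g : Perm (Fin (m + 1))) (x : M) : φ g⁻¹ * (φ g * x) = x := by
  rw [← mul_assoc, ← map_mul, inv_mul_cancel, map_one, one_mul]

lemma phi_mul_inv (g : Perm (Fin (m + 1))) (x : M) : φ g * (φ g⁻¹ * x) = x := by
  rw [← mul_assoc, ← map_mul, mul_inv_cancel, map_one, one_mul]

lemma stab1 (hm : 0 < m) (h : Sys s t m) (hφ : ∀ i, i < m → φ (sw m i) = s i)
    (g : Perm (Fin (m + 1))) (h0 : g (P m 0) = P m 1) (h1 : g (P m 1) = P m 0) :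
    φ g * t 0 = t 0 * φ g := by
  have e1 : g = sw m 0 * (sw m 0 * g) := by rw [← mul_assoc, (sw_cox m).sq 0 hm, one_mul]
  have k := stab0 hm h hφ (sw m 0 * g) (by simp [sw_eq hm, h0]) (by simp [sw_eq hm, h1])
  rw [e1, map_mul, mul_assoc, k, hφ 0 hm, ← mul_assoc, h.st 0 hm, ← mul_assoc, h.ts 0 hm]

/-- conjugates of `t 0` -/
def E (φ : Perm (Fin (m + 1)) →* M) (t : ℕ → M) (g : Perm (Fin (m + 1))) : M :=
  φ g * t 0 * φ g⁻¹

lemma E_of_comm (g g' : Perm (Fin (m + 1)))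
    (hh : φ (g'⁻¹ * g) * t 0 = t 0 * φ (g'⁻¹ * g)) : E φ t g = E φ t g' := by
  have e1 : g = g' * (g'⁻¹ * g) := by simp
  have : φ g * t 0 = φ g' * t 0 * φ (g'⁻¹ * g) := by
    rw [mul_assoc, ← hh, ← mul_assoc, ← map_mul, ← e1]
  rw [E, this, E, mul_assoc _ (φ _), ← map_mul]; simp

open Classical in
/-- the idempotents -/
noncomputable def ee (φ : Perm (Fin (m + 1)) →* M) (t : ℕ → M) (a b : Fin (m + 1)) : M :=
  if h : a ≠ b ∧ ∃ g : Perm (Fin (m + 1)), g (P m 0) = a ∧ g (P m 1) = b then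
    E φ t h.2.choose else 1

lemma ee_E (hm : 0 < m) (h : Sys s t m) (hφ : ∀ i, i < m → φ (sw m i) = s i)
    (g : Perm (Fin (m + 1))) : ee φ t (g (P m 0)) (g (P m 1)) = E φ t g := by
  have hh : g (P m 0) ≠ g (P m 1) ∧ ∃ g' : Perm (Fin (m + 1)),
      g' (P m 0) = g (P m 0) ∧ g' (P m 1) = g (P m 1) :=
    ⟨fun h' => P_ne (by omega) (by omega) (by omega) (g.injective h'), g, rfl, rfl⟩
  rw [ee, dif_pos hh]
  apply E_of_comm
  have := hh.2.choose_spec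
  apply stab0 hm h hφ
  · rw [Perm.mul_apply, this.1, ← Perm.mul_apply, inv_mul_cancel, Perm.one_apply]
  · rw [Perm.mul_apply, this.2, ← Perm.mul_apply, inv_mul_cancel, Perm.one_apply]

lemma ee_refl (a : Fin (m + 1)) : ee φ t a a = 1 := by simp [ee]

lemma exists_pair {a b : Fin (m + 1)} (hab : a ≠ b) : 0 < m ∧
    ∃ g : Perm (Fin (m + 1)), g (P m 0) = a ∧ g (P m 1) = b := by
  obtain ⟨h1, g, hg⟩ := exists_perm (m := m) ![a, b] (by
    intro i j; fin_cases i <;> fin_cases j <;> simp [hab, hab.symm])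
  exact ⟨by omega, g, hg 0, hg 1⟩

lemma exists_triple {a b c : Fin (m + 1)} (hab : a ≠ b) (hac : a ≠ c) (hbc : b ≠ c) : 1 < m ∧
    ∃ g : Perm (Fin (m + 1)), g (P m 0) = a ∧ g (P m 1) = b ∧ g (P m 2) = c := by
  obtain ⟨h1, g, hg⟩ := exists_perm (m := m) ![a, b, c] (by
    intro i j
    fin_cases i <;> fin_cases j <;> simp [hab, hab.symm, hac, hac.symm, hbc, hbc.symm])
  exact ⟨by omega, g, hg 0, hg 1, hg 2⟩

lemma exists_quad {a b c d : Fin (m + 1)} (hab : a ≠ b) (hac : a ≠ c) (hbc : b ≠ c)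
    (had : a ≠ d) (hbd : b ≠ d) (hcd : c ≠ d) : 2 < m ∧
    ∃ g : Perm (Fin (m + 1)), g (P m 0) = a ∧ g (P m 1) = b ∧ g (P m 2) = c ∧ g (P m 3) = d := by
  obtain ⟨h1, g, hg⟩ := exists_perm (m := m) ![a, b, c, d] (by
    intro i j
    fin_cases i <;> fin_cases j <;> simp [hab, hab.symm, hac, hac.symm, hbc, hbc.symm,
      had, had.symm, hbd, hbd.symm, hcd, hcd.symm])
  exact ⟨by omega, g, hg 0, hg 1, hg 2, hg 3⟩

lemma ee_symm (h : Sys s t m) (hφ : ∀ i, i < m → φ (sw m i) = s i)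
    (a b : Fin (m + 1)) : ee φ t a b = ee φ t b a := by
  by_cases hab : a = b
  · rw [hab]
  obtain ⟨hm, g, rfl, rfl⟩ := exists_pair hab
  obtain ⟨-, g', h0, h1⟩ := exists_pair (Ne.symm hab)
  rw [ee_E hm h hφ, ← h0, ← h1, ee_E hm h hφ]
  apply E_of_comm
  apply stab1 hm h hφ
  · rw [Perm.mul_apply, ← h1, ← Perm.mul_apply, inv_mul_cancel, Perm.one_apply]
  · rw [Perm.mul_apply, ← h0, ← Perm.mul_apply, inv_mul_cancel, Perm.one_apply]

lemma ee_conj (h : Sys s t m) (hφ : ∀ i, i < m → φ (sw m i) = s i) (g : Perm (Fin (m + 1)))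
    (a b : Fin (m + 1)) : φ g * ee φ t a b = ee φ t (g a) (g b) * φ g := by
  by_cases hab : a = b
  · rw [hab, ee_refl, ee_refl, mul_one, one_mul]
  obtain ⟨hm, k, rfl, rfl⟩ := exists_pair hab
  rw [ee_E hm h hφ, ← Perm.mul_apply, ← Perm.mul_apply, ee_E hm h hφ, E, E, mul_inv_rev, map_mul,
    map_mul]
  simp only [mul_assoc]
  rw [← map_mul φ g⁻¹ g, inv_mul_cancel, map_one, mul_one]

lemma ee_conj' (h : Sys s t m) (hφ : ∀ i, i < m → φ (sw m i) = s i) (g : Perm (Fin (m + 1)))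
    (a b : Fin (m + 1)) : ee φ t (g a) (g b) = φ g * ee φ t a b * φ g⁻¹ := by
  rw [ee_conj h hφ, mul_assoc, ← map_mul, mul_inv_cancel, map_one, mul_one]

lemma ee_P (h : Sys s t m) (hφ : ∀ i, i < m → φ (sw m i) = s i) :
    ∀ i, i < m → ee φ t (P m i) (P m (i + 1)) = t i := by
  intro i
  induction i with
  | zero =>
    intro hi
    have := ee_E hi h hφ 1
    simpa [E] using this
  | succ i ih =>
    intro hi
    have h1 := ih (by omega)
    have h2 := ee_conj' h hφ (sw m (i + 1)) (P m i) (P m (i + 1))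
    rw [h1] at h2
    have h3 := ee_conj' h hφ (sw m i) (sw m (i + 1) (P m i)) (sw m (i + 1) (P m (i + 1)))
    have e1 : sw m (i + 1) (P m i) = P m i := by
      rw [sw_eq hi]
      exact swap_apply_of_ne_of_ne (P_ne (by omega) (by omega) (by omega))
        (P_ne (by omega) (by omega) (by omega))
    have e2 : sw m (i + 1) (P m (i + 1)) = P m (i + 2) := by
      rw [sw_eq hi, swap_apply_left]
    have e3 : sw m i (P m i) = P m (i + 1) := by
      rw [sw_eq (by omega), swap_apply_left]
    have e4 : sw m i (P m (i + 2)) = P m (i + 2) := by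
      rw [sw_eq (by omega)]
      exact swap_apply_of_ne_of_ne (P_ne (by omega) (by omega) (by omega))
        (P_ne (by omega) (by omega) (by omega))
    rw [h2, e1, e2, e3, e4] at h3
    have v : ∀ j, j < m → (sw m j)⁻¹ = sw m j := fun j hj =>
      inv_eq_of_mul_eq_one_right ((sw_cox m).sq j hj)
    rw [h3, v _ hi, v i (by omega), hφ _ hi, hφ i (by omega), ← h.sts i hi]
    simp only [mul_assoc]
    rw [h.cox.sq i (by omega), mul_one, ← mul_assoc, h.cox.sq i (by omega), one_mul]

lemma ee_idem (h : Sys s t m) (hφ : ∀ i, i < m → φ (sw m i) = s i)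
    (a b : Fin (m + 1)) : ee φ t a b * ee φ t a b = ee φ t a b := by
  by_cases hab : a = b
  · rw [hab, ee_refl, one_mul]
  obtain ⟨hm, g, rfl, rfl⟩ := exists_pair hab
  rw [ee_E hm h hφ, E]
  simp only [mul_assoc, phi_inv_mul]
  rw [← mul_assoc (t 0), h.tt 0 hm]

lemma ee_swap (h : Sys s t m) (hφ : ∀ i, i < m → φ (sw m i) = s i)
    (a b : Fin (m + 1)) : ee φ t a b * φ (swap a b) = ee φ t a b := by
  by_cases hab : a = b
  · rw [hab, swap_self, ee_refl, one_mul]; exact map_one φ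
  obtain ⟨hm, g, rfl, rfl⟩ := exists_pair hab
  rw [ee_E hm h hφ, swap_apply_apply, E, map_mul, map_mul, ← sw_eq (i := 0) hm, hφ 0 hm]
  simp only [mul_assoc, phi_inv_mul]
  rw [← mul_assoc (t 0), h.ts 0 hm]

lemma commute_conj (h : Sys s t m) (hφ : ∀ i, i < m → φ (sw m i) = s i)
    (g : Perm (Fin (m + 1))) (a b c d : Fin (m + 1))
    (hc : ee φ t a b * ee φ t c d = ee φ t c d * ee φ t a b) :
    ee φ t (g a) (g b) * ee φ t (g c) (g d) = ee φ t (g c) (g d) * ee φ t (g a) (g b) := by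
  simp only [ee_conj' h hφ, mul_assoc, phi_inv_mul]
  rw [← mul_assoc (ee φ t a b), hc, mul_assoc]

lemma ee_comm3 (h : Sys s t m) (hφ : ∀ i, i < m → φ (sw m i) = s i)
    (a b c : Fin (m + 1)) : ee φ t a b * ee φ t b c = ee φ t b c * ee φ t a b := by
  by_cases hab : a = b
  · rw [hab, ee_refl, one_mul, mul_one]
  by_cases hbc : b = c
  · rw [hbc, ee_refl, one_mul, mul_one]
  by_cases hac : a = c
  · rw [hac, ee_symm h hφ b c]
  obtain ⟨hm, g, rfl, rfl, rfl⟩ := exists_triple hab hac hbc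
  apply commute_conj h hφ
  rw [ee_P h hφ 0 (by omega), ee_P h hφ 1 (by omega)]
  exact h.tc 0 1 (by omega) (by omega) (by omega)

lemma ee_comm (h : Sys s t m) (hφ : ∀ i, i < m → φ (sw m i) = s i)
    (a b c d : Fin (m + 1)) : ee φ t a b * ee φ t c d = ee φ t c d * ee φ t a b := by
  by_cases hab : a = b
  · rw [hab, ee_refl, one_mul, mul_one]
  by_cases hcd : c = d
  · rw [hcd, ee_refl, one_mul, mul_one]
  by_cases hbc : b = c
  · rw [hbc]; exact ee_comm3 h hφ _ _ _
  by_cases hac : a = c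
  · rw [hac, ee_symm h hφ c b]; exact ee_comm3 h hφ _ _ _
  by_cases had : a = d
  · rw [had]; exact (ee_comm3 h hφ _ _ _).symm
  by_cases hbd : b = d
  · rw [hbd, ee_symm h hφ c d]; exact ee_comm3 h hφ _ _ _
  obtain ⟨hm, g, rfl, rfl, rfl, rfl⟩ := exists_quad hab hac hbc had hbd hcd
  apply commute_conj h hφ
  rw [ee_P h hφ 0 (by omega), ee_P h hφ 2 (by omega)]
  exact h.tc 0 2 (by omega) (by omega) (by omega)

lemma ee_trans (h : Sys s t m) (hφ : ∀ i, i < m → φ (sw m i) = s i)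
    (a b c : Fin (m + 1)) : ee φ t a b * ee φ t b c = ee φ t a b * ee φ t a c := by
  by_cases hab : a = b
  · rw [hab]
  by_cases hbc : b = c
  · rw [hbc, ee_refl, mul_one, ee_idem h hφ]
  by_cases hac : a = c
  · rw [hac, ee_symm h hφ b c, ee_refl, mul_one, ee_idem h hφ]
  obtain ⟨hm, g, rfl, rfl, rfl⟩ := exists_triple hab hac hbc
  simp only [ee_conj' h hφ, mul_assoc, phi_inv_mul]
  have h0 : ee φ t (P m 0) (P m 1) = t 0 := ee_P h hφ 0 (by omega)
  have h1 : ee φ t (P m 1) (P m 2) = t 1 := ee_P h hφ 1 (by omega)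
  have h2 := ee_conj h hφ (sw m 1) (P m 0) (P m 1)
  have e1 : sw m 1 (P m 0) = P m 0 := by
    rw [sw_eq hm]
    exact swap_apply_of_ne_of_ne (P_ne (by omega) (by omega) (by omega))
      (P_ne (by omega) (by omega) (by omega))
  have e2 : sw m 1 (P m 1) = P m 2 := by
    rw [sw_eq hm, swap_apply_left]
  rw [e1, e2, h0, hφ 1 hm] at h2
  have h3 := h.tst 0 hm
  rw [mul_assoc, zero_add, h2, ← mul_assoc] at h3
  have h4 : t 0 * ee φ t (P m 0) (P m 2) = t 0 * t 1 := by
    have := congrArg (· * s 1) h3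
    simp only [mul_assoc, h.cox.sq 1 hm, mul_one, h.ts 1 hm] at this
    exact this
  rw [h0, h1, ← mul_assoc (t 0), ← mul_assoc (t 0), h4]

lemma esys (h : Sys s t m) (hφ : ∀ i, i < m → φ (sw m i) = s i) : ESys φ (ee φ t) where
  refl := ee_refl
  idem := ee_idem h hφ
  symm := ee_symm h hφ
  comm := ee_comm h hφ
  conj := ee_conj h hφ
  trans := ee_trans h hφ
  swap := ee_swap h hφ

end

section
variable {M α : Type*} [Monoid M] [DecidableEq α] {φ : Perm α →* M} {e : α → α → M}

/-- product of idempotents over a list of pairs -/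
def eL (e : α → α → M) (l : List (α × α)) : M := (l.map fun p => e p.1 p.2).prod

lemma eL_cons (p : α × α) (l : List (α × α)) : eL e (p :: l) = e p.1 p.2 * eL e l := by
  simp [eL]

lemma eL_append (l l' : List (α × α)) : eL e (l ++ l') = eL e l * eL e l' := by
  simp [eL]

lemma e_eL_comm (h : ESys φ e) (a b : α) (l : List (α × α)) :
    e a b * eL e l = eL e l * e a b := by
  induction l with
  | nil => simp [eL]
  | cons p l ih => rw [eL_cons, ← mul_assoc, h.comm, mul_assoc, ih, mul_assoc]

lemma eL_comm (h : ESys φ e) (l l' : List (α × α)) : eL e l * eL e l' = eL e l' * eL e l := by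
  induction l with
  | nil => simp [eL]
  | cons p l ih => rw [eL_cons, mul_assoc, ih, ← mul_assoc, e_eL_comm h, mul_assoc]

lemma e_eL_mem (h : ESys φ e) (a b : α) (l : List (α × α)) (hl : (a, b) ∈ l) :
    e a b * eL e l = eL e l := by
  induction l with
  | nil => simp at hl
  | cons p l ih =>
    rw [eL_cons]
    rcases List.mem_cons.1 hl with h1 | h1
    · subst h1
      rw [← mul_assoc, h.idem]
    · rw [← mul_assoc, h.comm, mul_assoc, ih h1]

lemma e_absorb_trans (h : ESys φ e) {a b c : α} {x : M} (h1 : e a b * x = x) (h2 : e b c * x = x) :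
    e a c * x = x := by
  have h3 : e a b * (e a c * x) = x := by rw [← mul_assoc, ← h.trans, mul_assoc, h2, h1]
  calc e a c * x = e a c * (e a b * (e a c * x)) := by rw [h3]
    _ = e a b * (e a c * x) := by
      rw [← mul_assoc, h.comm a c a b, mul_assoc, ← mul_assoc (e a c), h.idem]
    _ = x := h3

lemma e_eL_gen (h : ESys φ e) (a b : α) (l : List (α × α))
    (hl : Relation.EqvGen (fun a b => (a, b) ∈ l) a b) : e a b * eL e l = eL e l := by
  induction hl with
  | rel a b hab => exact e_eL_mem h a b l hab
  | refl a => rw [h.refl, one_mul]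
  | symm a b _ ih => rw [h.symm]; exact ih
  | trans a b c _ _ i1 i2 => exact e_absorb_trans h i1 i2

lemma eL_absorb (l : List (α × α)) (x : M) (hl : ∀ p ∈ l, e p.1 p.2 * x = x) :
    eL e l * x = x := by
  induction l with
  | nil => simp [eL]
  | cons p l ih =>
    rw [eL_cons, mul_assoc, ih fun q hq => hl q (List.mem_cons_of_mem _ hq),
      hl p List.mem_cons_self]

lemma eL_eq (h : ESys φ e) (l l' : List (α × α)) (h1 : ∀ p ∈ l, e p.1 p.2 * eL e l' = eL e l')
    (h2 : ∀ p ∈ l', e p.1 p.2 * eL e l = eL e l) : eL e l = eL e l' := by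
  rw [← eL_absorb l' (eL e l) h2, eL_comm h, eL_absorb l _ h1]

lemma phi_eL (h : ESys φ e) (g : Perm α) (l : List (α × α)) :
    φ g * eL e l = eL e (l.map fun p => (g p.1, g p.2)) * φ g := by
  induction l with
  | nil => simp [eL]
  | cons p l ih =>
    rw [eL_cons, List.map_cons, eL_cons, ← mul_assoc, h.conj, mul_assoc, ih, mul_assoc]

variable [Fintype α]

open Classical in
/-- list of pairs in the kernel of `f` -/
noncomputable def LF {κ : Type*} (f : α → κ) : List (α × α) :=
  (Finset.univ.filter fun p : α × α => f p.1 = f p.2).toList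

lemma mem_LF {κ : Type*} (f : α → κ) (p : α × α) : p ∈ LF f ↔ f p.1 = f p.2 := by
  simp [LF]

/-- idempotent of the kernel of `f` -/
noncomputable def eF (e : α → α → M) {κ : Type*} (f : α → κ) : M := eL e (LF f)

lemma eF_absorb (h : ESys φ e) {κ : Type*} (f : α → κ) {a b : α} (hab : f a = f b) :
    e a b * eF e f = eF e f := e_eL_mem h a b _ ((mem_LF f (a, b)).2 hab)

lemma eF_congr (h : ESys φ e) {κ κ' : Type*} (f : α → κ) (f' : α → κ')
    (hf : ∀ a b, f a = f b ↔ f' a = f' b) : eF e f = eF e f' := by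
  refine eL_eq h _ _ (fun p hp => ?_) (fun p hp => ?_)
  · exact eF_absorb h f' ((hf _ _).1 ((mem_LF _ _).1 hp))
  · exact eF_absorb h f ((hf _ _).2 ((mem_LF _ _).1 hp))

lemma eL_eq_eF (h : ESys φ e) (l : List (α × α)) :
    ∃ (f : α → Quotient (Relation.EqvGen.setoid fun a b => (a, b) ∈ l)), eL e l = eF e f := by
  refine ⟨Quotient.mk _, eL_eq h _ _ (fun p hp => ?_) (fun p hp => ?_)⟩
  · exact eF_absorb h _ (Quotient.sound (Relation.EqvGen.rel _ _ hp))
  · exact e_eL_gen h _ _ l (Quotient.exact ((mem_LF _ _).1 hp))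

lemma phi_eF (h : ESys φ e) (g : Perm α) {κ κ' : Type*} (f : α → κ) (f' : α → κ')
    (hf : ∀ a b, f a = f b ↔ f' (g a) = f' (g b)) : φ g * eF e f = eF e f' * φ g := by
  rw [eF, phi_eL h]
  congr 1
  refine eL_eq h _ _ (fun p hp => ?_) (fun p hp => ?_)
  · obtain ⟨q, hq, rfl⟩ := List.mem_map.1 hp
    exact eF_absorb h f' ((hf _ _).1 ((mem_LF _ _).1 hq))
  · apply e_eL_mem h
    refine List.mem_map.2 ⟨(g⁻¹ p.1, g⁻¹ p.2), ?_, by simp⟩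
    rw [mem_LF, hf]
    simpa using (mem_LF _ _).1 hp

lemma eF_phi_stab (h : ESys φ e) {κ : Type*} (f : α → κ) (g : Perm α) (hg : ∀ x, f (g x) = f x) :
    eF e f * φ g = eF e f := by
  let C : Submonoid (Perm α) :=
    { carrier := {g | eF e f * φ g = eF e f}
      one_mem' := by simp
      mul_mem' := by
        intro a b ha hb
        simp only [Set.mem_ofPred_eq] at ha hb ⊢
        rw [map_mul, ← mul_assoc, ha, hb] }
  refine swapgen f C (fun a b hab => ?_) _ g le_rfl hg
  change eF e f * φ (swap a b) = eF e f
  have h1 : eF e f * e a b = eF e f := by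
    have := eF_absorb h f hab
    rw [eF, e_eL_comm h] at this
    exact this
  rw [← h1, mul_assoc, h.swap]

lemma phi_eF_stab (h : ESys φ e) {κ : Type*} (f : α → κ) (g : Perm α) (hg : ∀ x, f (g x) = f x) :
    φ g * eF e f = eF e f := by
  rw [phi_eF h g f f (fun a b => by rw [hg, hg]), eF_phi_stab h f g hg]

lemma exists_rep (h : ESys φ e) (hgen : ∀ C : Submonoid M, (∀ g, φ g ∈ C) →
    (∀ a b, e a b ∈ C) → C = ⊤) (t : M) : ∃ l g, t = eL e l * φ g := by
  let C : Submonoid M :=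
    { carrier := {t | ∃ l g, t = eL e l * φ g}
      one_mem' := ⟨[], 1, by simp [eL]⟩
      mul_mem' := by
        rintro _ _ ⟨l, g, rfl⟩ ⟨l', g', rfl⟩
        refine ⟨l ++ l'.map (fun p => (g p.1, g p.2)), g * g', ?_⟩
        rw [eL_append, map_mul, mul_assoc, ← mul_assoc (φ g), phi_eL h]
        simp only [mul_assoc] }
  have : C = ⊤ := hgen C (fun g => ⟨[], g, by simp [eL]⟩) (fun a b => ⟨[(a, b)], 1, by simp [eL]⟩)
  have ht : t ∈ C := by rw [this]; trivial
  exact ht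

end

lemma fibEquiv {α β Q K : Type*} [Finite α] [Finite β] (f : α → Q) (F : β → K) (η : Q ≃ K)
    (h : ∀ q, Nat.card {a // f a = q} = Nat.card {b // F b = η q}) :
    ∃ k : α ≃ β, ∀ a, F (k a) = η (f a) := by
  let c : ∀ q, {a // f a = q} ≃ {b // F b = η q} := fun q => (Finite.card_eq.1 (h q)).some
  refine ⟨(Equiv.sigmaFiberEquiv f).symm.trans ((Equiv.sigmaCongr η c).trans
    (Equiv.sigmaFiberEquiv F)), fun a => ?_⟩
  exact (c (f a) ⟨a, rfl⟩).2

section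
variable {n : ℕ}

/-- index type of parts -/
abbrev KK (p : Nat.Partition n) := p.parts.ToType

/-- size of a part -/
def sz (p : Nat.Partition n) (k : KK p) : ℕ := k.1

lemma card_sz (p : Nat.Partition n) (i : ℕ) : Nat.card {k : KK p // sz p k = i} = p.parts.count i := by
  rw [← Nat.card_fin (p.parts.count i)]
  exact Nat.card_congr (Equiv.sigmaSubtype (β := fun x => Fin (p.parts.count x)) i)

lemma sz_mem (p : Nat.Partition n) (k : KK p) : sz p k ∈ p.parts := by
  have := k.2.2
  rw [← Multiset.count_pos]
  exact lt_of_le_of_lt (Nat.zero_le _) this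

lemma exists_F (p : Nat.Partition n) : ∃ F : Fin n → KK p,
    ∀ k, Nat.card {a // F a = k} = sz p k := by
  have h1 : Fintype.card (Σ k : KK p, Fin (sz p k)) = Fintype.card (Fin n) := by
    rw [Fintype.card_sigma, Fintype.card_fin]
    simp only [Fintype.card_fin]
    conv_rhs => rw [← p.parts_sum, Multiset.sum_eq_sum_coe]
    rfl
  let E := Fintype.equivOfCardEq h1
  refine ⟨fun a => (E.symm a).1, fun k => ?_⟩
  rw [← Nat.card_fin (sz p k)]
  refine Nat.card_congr ?_
  exact (E.symm.subtypeEquiv (q := fun x => x.1 = k) (fun a => Iff.rfl)).trans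
    (Equiv.sigmaSubtype (β := fun k => Fin (sz p k)) k)

/-- standard map with fibres given by the partition -/
noncomputable def FF (p : Nat.Partition n) : Fin n → KK p := (exists_F p).choose

lemma card_FF (p : Nat.Partition n) (k : KK p) : Nat.card {a // FF p a = k} = sz p k :=
  (exists_F p).choose_spec k

lemma FF_surj (p : Nat.Partition n) : Function.Surjective (FF p) := by
  intro k
  have h1 := card_FF p k
  have h2 : 0 < sz p k := p.parts_pos (sz_mem p k)
  rw [← h1, Nat.card_pos_iff] at h2
  obtain ⟨a, ha⟩ := h2.1
  exact ⟨a, ha⟩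

lemma exists_type {κ : Type*} (f : Fin n → κ) : ∃ (p : Nat.Partition n) (k : Perm (Fin n)),
    ∀ a b, f a = f b ↔ FF p (k a) = FF p (k b) := by
  classical
  let Q := Set.range f
  have : Fintype Q := Fintype.ofFinite _
  let f' : Fin n → Q := Set.rangeFactorization f
  let c : Q → ℕ := fun q => Nat.card {a // f' a = q}
  let p : Nat.Partition n :=
    { parts := (Finset.univ : Finset Q).val.map c
      parts_pos := by
        intro i hi
        obtain ⟨q, -, rfl⟩ := Multiset.mem_map.1 hi
        obtain ⟨a, ha⟩ := Set.rangeFactorization_surjective q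
        exact Nat.card_pos_iff.2 ⟨⟨⟨a, ha⟩⟩, inferInstance⟩
      parts_sum := by
        change ∑ q, c q = n
        conv_rhs => rw [← Nat.card_fin n, ← Nat.card_congr (Equiv.sigmaFiberEquiv f')]
        rw [Nat.card_sigma] }
  obtain ⟨η, hη⟩ := fibEquiv c (sz p) (Equiv.refl ℕ) (fun i => by
    rw [Equiv.refl_apply, card_sz, Multiset.count_map, Nat.card_eq_fintype_card,
      Fintype.card_subtype, Finset.card, Finset.filter_val]
    simp only [eq_comm])
  obtain ⟨k, hk⟩ := fibEquiv f' (FF p) η (fun q => by rw [card_FF, hη]; rfl)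
  refine ⟨p, k, fun a b => ?_⟩
  rw [hk, hk, η.injective.eq_iff, Subtype.ext_iff]
  rfl

lemma exists_lift (p : Nat.Partition n) (π : Perm (KK p)) (hπ : sz p ∘ π = sz p) :
    ∃ k : Perm (Fin n), ∀ a, FF p (k a) = π (FF p a) :=
  fibEquiv (FF p) (FF p) π fun q => by
    rw [card_FF, card_FF]; exact (congrFun hπ q).symm

lemma card_A (p : Nat.Partition n) : Nat.card {π : Perm (KK p) // sz p ∘ π = sz p} =
    ∏ i ∈ Finset.Icc 1 n, (p.parts.count i).factorial := by
  classical
  rw [Nat.card_eq_fintype_card, DomMulAct.stabilizer_card']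
  simp only [← Nat.card_eq_fintype_card, card_sz]
  refine Finset.prod_subset ?_ ?_
  · intro i hi
    obtain ⟨k, -, rfl⟩ := Finset.mem_image.1 hi
    exact Finset.mem_Icc.2 ⟨p.parts_pos (sz_mem p k), Nat.Partition.le_of_mem_parts (sz_mem p k)⟩
  · intro i _ hi
    rw [← card_sz, Nat.card_eq_zero.2, Nat.factorial_zero]
    left
    refine ⟨fun k => hi (Finset.mem_image.2 ⟨k.1, Finset.mem_univ _, k.2⟩)⟩

lemma card_B (p : Nat.Partition n) : Nat.card {π : Perm (Fin n) // FF p ∘ π = FF p} =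
    ∏ i ∈ Finset.Icc 1 n, i.factorial ^ (p.parts.count i) := by
  classical
  rw [Nat.card_eq_fintype_card, DomMulAct.stabilizer_card]
  simp only [← Nat.card_eq_fintype_card, card_FF]
  have h1 : ∏ k : KK p, (sz p k).factorial = (p.parts.map Nat.factorial).prod := by
    rw [← Multiset.map_univ]; rfl
  rw [h1, Finset.prod_multiset_map_count]
  refine Finset.prod_subset ?_ ?_
  · intro i hi
    rw [Multiset.mem_toFinset] at hi
    exact Finset.mem_Icc.2 ⟨p.parts_pos hi, Nat.Partition.le_of_mem_parts hi⟩
  · intro i _ hi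
    rw [Multiset.mem_toFinset] at hi
    rw [Multiset.count_eq_zero_of_notMem hi, pow_zero]

variable {M : Type*} [Monoid M] {φ : Perm (Fin n) →* M} {e : Fin n → Fin n → M}

lemma exists_rep' (h : ESys φ e) (hgen : ∀ C : Submonoid M, (∀ g, φ g ∈ C) →
    (∀ a b, e a b ∈ C) → C = ⊤) (t : M) :
    ∃ (p : Nat.Partition n) (xy : Perm (Fin n) × Perm (Fin n)),
      t = φ xy.1 * eF e (FF p) * φ xy.2 := by
  obtain ⟨l, g, rfl⟩ := exists_rep h hgen t
  obtain ⟨f, hf⟩ := eL_eq_eF h l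
  obtain ⟨p, k, hk⟩ := exists_type f
  refine ⟨p, (k⁻¹, k * g), ?_⟩
  rw [hf, map_mul, mul_assoc, ← mul_assoc (eF e (FF p)), ← phi_eF h k f (FF p) hk]
  simp only [← mul_assoc]
  rw [← map_mul φ k⁻¹ k, inv_mul_cancel, map_one, one_mul]

theorem main_bound (h : ESys φ e) (hgen : ∀ C : Submonoid M, (∀ g, φ g ∈ C) →
    (∀ a b, e a b ∈ C) → C = ⊤) : Finite M ∧ Nat.card M ≤
        ∑ p : Nat.Partition n,
          n.factorial ^ 2 /
            ∏ i ∈ Finset.Icc 1 n,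
              ((p.parts.count i).factorial * i.factorial ^ (2 * p.parts.count i)) := by
  classical
  choose pt xy hxy using exists_rep' h hgen
  have fin : Finite M := Finite.of_injective (fun t => (pt t, xy t)) (by
    intro t t' ht
    simp only [Prod.mk.injEq] at ht
    rw [hxy t, hxy t', ht.1, ht.2])
  refine ⟨fin, ?_⟩
  rw [← Nat.card_congr (Equiv.sigmaFiberEquiv pt), Nat.card_sigma]
  refine Finset.sum_le_sum fun p _ => ?_
  have hprod : ∏ i ∈ Finset.Icc 1 n,
      ((p.parts.count i).factorial * i.factorial ^ (2 * p.parts.count i)) =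
      Nat.card {π : Perm (KK p) // sz p ∘ π = sz p} *
        (Nat.card {π : Perm (Fin n) // FF p ∘ π = FF p} *
          Nat.card {π : Perm (Fin n) // FF p ∘ π = FF p}) := by
    rw [card_A, card_B, ← Finset.prod_mul_distrib, ← Finset.prod_mul_distrib]
    refine Finset.prod_congr rfl fun i _ => ?_
    rw [two_mul, pow_add]
  have hpos : 0 < ∏ i ∈ Finset.Icc 1 n,
      ((p.parts.count i).factorial * i.factorial ^ (2 * p.parts.count i)) :=
    Finset.prod_pos fun i _ => by positivity
  rw [Nat.le_div_iff_mul_le hpos, hprod]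
  have hn : n.factorial ^ 2 = Nat.card (Perm (Fin n) × Perm (Fin n)) := by
    rw [Nat.card_prod, Nat.card_perm, Nat.card_fin, sq]
  rw [hn, ← Nat.card_prod, ← Nat.card_prod, ← Nat.card_prod]
  choose L hL using exists_lift p
  refine Nat.card_le_card_of_injective
    (fun q => ((xy q.1.1).1 * q.2.2.1.1 * L q.2.1.1 q.2.1.2,
      (L q.2.1.1 q.2.1.2)⁻¹ * q.2.2.2.1 * (xy q.1.1).2)) ?_
  have ev : ∀ (t : {t // pt t = p}) (π : {π : Perm (KK p) // sz p ∘ π = sz p})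
      (a b : {π : Perm (Fin n) // FF p ∘ π = FF p}),
      φ ((xy t.1).1 * a.1 * L π.1 π.2) * eF e (FF p) * φ ((L π.1 π.2)⁻¹ * b.1 * (xy t.1).2) =
        t.1 := by
    rintro ⟨t, ht⟩ ⟨π, hπ⟩ ⟨a, ha⟩ ⟨b, hb⟩
    have h1 := phi_eF h (L π hπ) (FF p) (FF p) (fun a b => by
      rw [hL, hL, π.injective.eq_iff])
    have h2 := phi_eF_stab h (FF p) a (fun x => congrFun ha x)
    have h3 := eF_phi_stab h (FF p) b (fun x => congrFun hb x)
    calc _ = φ (xy t).1 * φ a * (φ (L π hπ) * eF e (FF p)) * φ (L π hπ)⁻¹ * φ b * φ (xy t).2 := by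
          simp only [map_mul, mul_assoc]
      _ = φ (xy t).1 * (φ a * eF e (FF p)) * (φ (L π hπ) * φ (L π hπ)⁻¹) * φ b * φ (xy t).2 := by
          rw [h1]; simp only [mul_assoc]
      _ = φ (xy t).1 * (eF e (FF p) * φ b) * φ (xy t).2 := by
          rw [h2, ← map_mul, mul_inv_cancel, map_one]; simp only [mul_assoc, one_mul]
      _ = t := by rw [h3]; subst ht; exact (hxy t).symm
  rintro ⟨t, π, a, b⟩ ⟨t', π', a', b'⟩ hq
  simp only [Prod.mk.injEq] at hq
  obtain ⟨q1, q2⟩ := hq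
  have ht : t = t' := by
    apply Subtype.ext
    rw [← ev t π a b, ← ev t' π' a' b', q1, q2]
  subst ht
  rw [mul_assoc, mul_assoc, mul_right_inj] at q1
  have hp : π = π' := by
    apply Subtype.ext
    ext1 k
    obtain ⟨x, rfl⟩ := FF_surj p k
    have h1 := congrArg (fun g : Perm (Fin n) => FF p (g x)) q1
    simp only [Perm.mul_apply] at h1
    have h2 : ∀ y, FF p (a.1 y) = FF p y := congrFun a.2
    have h3 : ∀ y, FF p (a'.1 y) = FF p y := congrFun a'.2
    rwa [h2, h3, hL, hL] at h1
  subst hp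
  rw [mul_left_inj] at q1
  rw [mul_left_inj, mul_right_inj] at q2
  rw [Subtype.ext q1, Subtype.ext q2]

end

end ITP

namespace ITP

/-- σ with natural index -/
def sN (m : ℕ) (i : ℕ) : ITMonoid (m + 1) := if h : i < m then σI (n := m + 1) ⟨i, h⟩ else 1

/-- τ with natural index -/
def tN (m : ℕ) (i : ℕ) : ITMonoid (m + 1) := if h : i < m then τI (n := m + 1) ⟨i, h⟩ else 1

lemma sN_sq (m i : ℕ) : sN m i * sN m i = 1 := by
  by_cases h : i < m
  · rw [sN, dif_pos h]
    exact PresentedMonoid.mk_eq_mk_of_rel (ITRel.sigma_sq (n := m + 1) ⟨i, h⟩)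
  · rw [sN, dif_neg h, one_mul]

lemma sys (m : ℕ) : Sys (sN m) (tN m) m where
  cox :=
    { sq := fun i _ => sN_sq m i
      comm := fun i j hi hj => by
        have h' : i < m := by omega
        rw [sN, sN, dif_pos hj, dif_pos h']
        exact PresentedMonoid.mk_eq_mk_of_rel (ITRel.sigma_comm (n := m + 1) ⟨i, h'⟩ ⟨j, hj⟩
          (by simp only [Nat.dist]; omega))
      braid := fun i hi => by
        have h' : i < m := by omega
        rw [sN, sN, dif_pos hi, dif_pos h']
        exact PresentedMonoid.mk_eq_mk_of_rel (ITRel.braid (n := m + 1) ⟨i, h'⟩ ⟨i + 1, hi⟩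
          (by simp only [Nat.dist]; omega)) }
  tt i hi := by
    rw [tN, dif_pos hi]
    exact PresentedMonoid.mk_eq_mk_of_rel (ITRel.tau_idem (n := m + 1) ⟨i, hi⟩)
  tc i j hi hj hij := by
    rw [tN, tN, dif_pos hi, dif_pos hj]
    exact PresentedMonoid.mk_eq_mk_of_rel (ITRel.tau_comm (n := m + 1) ⟨i, hi⟩ ⟨j, hj⟩
      (fun h => hij (congrArg Fin.val h)))
  ts i hi := by
    rw [tN, sN, dif_pos hi, dif_pos hi]
    exact PresentedMonoid.mk_eq_mk_of_rel (ITRel.tau_sigma (n := m + 1) ⟨i, hi⟩)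
  st i hi := by
    rw [tN, sN, dif_pos hi, dif_pos hi]
    exact PresentedMonoid.mk_eq_mk_of_rel (ITRel.sigma_tau (n := m + 1) ⟨i, hi⟩)
  tsc j hj h1 := by
    have h0 : 0 < m := by omega
    rw [tN, sN, dif_pos h0, dif_pos hj]
    exact PresentedMonoid.mk_eq_mk_of_rel (ITRel.tau_sigma_comm (n := m + 1) ⟨0, h0⟩ ⟨j, hj⟩
      (by simp only [Nat.dist]; omega))
  sts i hi := by
    have h' : i < m := by omega
    rw [tN, tN, sN, sN, dif_pos hi, dif_pos hi, dif_pos h', dif_pos h']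
    exact PresentedMonoid.mk_eq_mk_of_rel (ITRel.sigma_tau_sigma (n := m + 1) ⟨i, h'⟩ ⟨i + 1, hi⟩
      (by simp only [Nat.dist]; omega))
  tst i hi := by
    have h' : i < m := by omega
    rw [tN, tN, sN, dif_pos hi, dif_pos hi, dif_pos h']
    exact PresentedMonoid.mk_eq_mk_of_rel (ITRel.tau_sigma_tau (n := m + 1) ⟨i, h'⟩ ⟨i + 1, hi⟩
      (by simp only [Nat.dist]; omega))

lemma exists_phi (m : ℕ) : ∃ φ : Equiv.Perm (Fin (m + 1)) →* ITMonoid (m + 1),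
    ∀ i, i < m → φ (sw m i) = sN m i := by
  let u : ℕ → (ITMonoid (m + 1))ˣ := fun i => ⟨sN m i, sN m i, sN_sq m i, sN_sq m i⟩
  have hs := (sys m).cox
  obtain ⟨φ, hφ⟩ := cox_hom u m ⟨fun i hi => Units.ext (hs.sq i hi),
    fun i j hi hj => Units.ext (hs.comm i j hi hj), fun i hi => Units.ext (hs.braid i hi)⟩
  refine ⟨(Units.coeHom _).comp φ, fun i hi => ?_⟩
  rw [MonoidHom.comp_apply, hφ i hi]
  rfl

end ITP

/-- Corollary `corollary9` of Kudryavtseva–Mazorchuk: the monoid `T` is finite and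
`|T| ≤ Σ_{λ ⊢ n} (n!)² / Π_{i=1}^n (λ^{(i)}! (i!)^{2 λ^{(i)}})`, where `λ^{(i)}` is the
number of parts of the partition `λ` equal to `i`. -/
theorem IT_card_le (n : ℕ) (hn : 1 ≤ n) :
    Finite (ITMonoid n) ∧
      Nat.card (ITMonoid n) ≤
        ∑ p : Nat.Partition n,
          n.factorial ^ 2 /
            ∏ i ∈ Finset.Icc 1 n,
              ((p.parts.count i).factorial * i.factorial ^ (2 * p.parts.count i)) := by
  obtain ⟨m, rfl⟩ : ∃ m, n = m + 1 := ⟨n - 1, by omega⟩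
  obtain ⟨φ, hφ⟩ := ITP.exists_phi m
  refine ITP.main_bound (ITP.esys (ITP.sys m) hφ) fun C h1 h2 => ?_
  rw [eq_top_iff, ← PresentedMonoid.closure_range_of, Submonoid.closure_le]
  rintro _ ⟨i | i, rfl⟩
  · have hi : i.1 < m := i.2
    have h3 := h1 (ITP.sw m i.1)
    rw [hφ _ hi, ITP.sN, dif_pos hi] at h3
    exact h3
  · have hi : i.1 < m := i.2
    have h3 := h2 (ITP.P m i.1) (ITP.P m (i.1 + 1))
    rw [ITP.ee_P (ITP.sys m) hφ _ hi, ITP.tN, dif_pos hi] at h3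
    exact h3
end

section
/- The monoid T is finite and its cardinality equals Σ_{λ ⊢ n} (n!)² / Π_{i=1}^n (λ^{(i)}!·(i!)^{2λ^{(i)}}), where the sum is over all partitions λ of n and λ^{(i)} denotes the number of parts of λ equal to i (each quotient being an exact natural-number division). (This is the cardinality form of the theorem that T is isomorphic, via σ_i ↦ s_i and τ_i ↦ ϱ_i, to the monoid IT_n, the greatest factorizable inverse submonoid of the dual symmetric inverse monoid.) -/
theorem cox_bound (m : ℕ) : ∀ {M : Type} [Monoid M] (s : ℕ → M),
    (∀ i < m, s i * s i = 1) →
    (∀ i j, i < m → j < m → i + 1 < j → s i * s j = s j * s i) →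
    (∀ i, i + 1 < m → s i * s (i+1) * s i = s (i+1) * s i * s (i+1)) →
    ∃ A : Set M, A.Finite ∧ A.ncard ≤ (m+1).factorial ∧ 1 ∈ A ∧
      ∀ a ∈ A, ∀ i < m, a * s i ∈ A := by
  induction m with
  | zero =>
    intro M _ s _ _ _
    exact ⟨{1}, Set.finite_singleton _, by simp, by simp, by simp⟩
  | succ m ih =>
    intro M _ s h1 h2 h3
    obtain ⟨A, hf, hc, h1A, hA⟩ := ih s (fun i hi => h1 i (by omega))
      (fun i j hi hj => h2 i j (by omega) (by omega)) (fun i hi => h3 i (by omega))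
    obtain ⟨w, w0, ws⟩ : ∃ w : ℕ → M, w 0 = 1 ∧ ∀ k, w (k+1) = w k * s (m - k) :=
      ⟨fun k => Nat.rec 1 (fun k x => x * s (m - k)) k, rfl, fun k => rfl⟩
    have hcomm : ∀ k i, i + k < m → w k * s i = s i * w k := by
      intro k
      induction k with
      | zero => intro i _; simp [w0]
      | succ k ihk =>
        intro i hi
        rw [ws, mul_assoc, ← h2 i (m-k) (by omega) (by omega) (by omega), ← mul_assoc,
          ihk i (by omega), mul_assoc]
    have hshift : ∀ k i, k ≤ m + 1 → m < i + k → i < m → w k * s (i + 1) = s i * w k := by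
      intro k
      induction k with
      | zero => intro i _ h h'; omega
      | succ k ihk =>
        intro i hk hi him
        by_cases hik : m < i + k
        · rw [ws, mul_assoc, h2 (m-k) (i+1) (by omega) (by omega) (by omega), ← mul_assoc,
            ihk i (by omega) hik him, mul_assoc]
        · obtain ⟨l, rfl⟩ : ∃ l, k = l + 1 := ⟨k - 1, by omega⟩
          have e1 : m - (l+1) = i := by omega
          have e2 : m - l = i + 1 := by omega
          rw [ws, ws, e1, e2]
          have := h3 i (by omega)
          calc w l * s (i+1) * s i * s (i+1) = w l * (s (i+1) * s i * s (i+1)) := by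
                simp only [mul_assoc]
            _ = (w l * s i) * (s (i+1) * s i) := by rw [← this]; simp only [mul_assoc]
            _ = _ := by rw [hcomm l i (by omega)]; simp only [mul_assoc]
    refine ⟨(fun p : M × ℕ => p.1 * w p.2) '' (A ×ˢ (Set.Iic (m+1))), ?_, ?_, ?_, ?_⟩
    · exact (hf.prod (Set.finite_Iic _)).image _
    · refine (Set.ncard_image_le (hf.prod (Set.finite_Iic _))).trans ?_
      rw [Set.ncard_prod, Nat.factorial_succ (m+1), mul_comm (m+1+1)]
      refine Nat.mul_le_mul hc ?_
      rw [← Finset.coe_Iic, Set.ncard_coe_finset]; simp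
    · exact ⟨(1, 0), ⟨h1A, by simp⟩, by simp [w0]⟩
    · rintro _ ⟨⟨a, k⟩, ⟨ha, hk⟩, rfl⟩ i hi
      simp only [Set.mem_Iic] at hk ha
      simp only
      rcases lt_trichotomy (i + k) m with h | h | h
      · refine ⟨(a * s i, k), ⟨hA a ha i (by omega), hk⟩, ?_⟩
        simp only [mul_assoc]; rw [hcomm k i h]
      · refine ⟨(a, k+1), ⟨ha, by simp; omega⟩, ?_⟩
        simp only [ws, mul_assoc]
        rw [show m - k = i by omega]
      · rcases eq_or_lt_of_le (show m + 1 ≤ i + k from h) with h' | h'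
        · obtain ⟨l, rfl⟩ : ∃ l, k = l + 1 := ⟨k - 1, by omega⟩
          refine ⟨(a, l), ⟨ha, by simp; omega⟩, ?_⟩
          simp only [ws, mul_assoc]
          rw [show m - l = i by omega, h1 i hi, mul_one]
        · obtain ⟨l, rfl⟩ : ∃ l, i = l + 1 := ⟨i - 1, by omega⟩
          refine ⟨(a * s l, k), ⟨hA a ha l (by omega), hk⟩, ?_⟩
          simp only [mul_assoc]; rw [hshift k l hk (by omega) (by omega)]

theorem perm_gen {α : Type} [Fintype α] [DecidableEq α] (R : α → α → Prop)
    (hR : Equivalence R)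
    (C : Submonoid (Equiv.Perm α)) (h : ∀ a b, a ≠ b → R a b → Equiv.swap a b ∈ C)
    (g : Equiv.Perm α) (hg : ∀ a, R (g a) a) : g ∈ C := by
  induction hk : g.support.card using Nat.strong_induction_on generalizing g with
  | _ k ih =>
    by_cases h1 : g = 1
    · rw [h1]; exact C.one_mem
    · obtain ⟨x, hx⟩ : ∃ x, g x ≠ x := by
        by_contra hcon; push Not at hcon; exact h1 (Equiv.ext hcon)
      have key := Equiv.Perm.card_support_swap_mul hx
      have hm := ih _ (hk ▸ key) (Equiv.swap x (g x) * g) (by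
        intro a
        rw [Equiv.Perm.mul_apply, Equiv.swap_apply_def]
        split_ifs with e1 e2
        · exact hR.trans (hR.trans (hg x) (e1 ▸ hR.refl _)) (hg a)
        · exact (g.injective e2) ▸ hR.refl _
        · exact hg a) rfl
      have : g = Equiv.swap x (g x) * (Equiv.swap x (g x) * g) := by
        rw [← mul_assoc, Equiv.swap_mul_self, one_mul]
      rw [this]
      exact C.mul_mem (h _ _ (Ne.symm hx) (hR.symm (hg x))) hm

theorem exists_perm_ext {k : ℕ} {α : Type} [Fintype α] [DecidableEq α] (v w : Fin k → α)
    (hv : Function.Injective v) (hw : Function.Injective w) :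
    ∃ g : Equiv.Perm α, ∀ i, g (v i) = w i := by
  classical
  let e : {x // x ∈ Set.range v} ≃ {x // x ∈ Set.range w} :=
    (Equiv.ofInjective v hv).symm.trans (Equiv.ofInjective w hw)
  refine ⟨e.extendSubtype, fun i => ?_⟩
  rw [Equiv.extendSubtype_apply_of_mem e (v i) ⟨i, rfl⟩]
  have : (⟨v i, ⟨i, rfl⟩⟩ : {x // x ∈ Set.range v}) = Equiv.ofInjective v hv i := rfl
  simp only [e, Equiv.trans_apply, this, Equiv.symm_apply_apply]
  rfl

theorem adj_closure (n : ℕ) :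
    Submonoid.closure (Set.range (sPerm (n := n))) = ⊤ := by
  cases n with
  | zero => exact Subsingleton.elim _ _
  | succ k => exact Equiv.Perm.mclosure_swap_castSucc_succ k

theorem sPerm_sq {n : ℕ} (i : Fin (n-1)) : sPerm i * sPerm i = 1 := Equiv.swap_mul_self _ _

theorem sPerm_comm {n : ℕ} (i j : Fin (n-1)) (h : i.1 + 1 < j.1) :
    sPerm i * sPerm j = sPerm j * sPerm i := by
  apply Equiv.Perm.Disjoint.commute
  apply Equiv.Perm.disjoint_swap_swap
  simp [lo, hi, Fin.ext_iff]; omega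

theorem sPerm_braid {n : ℕ} (i j : Fin (n-1)) (h : i.1 + 1 = j.1) :
    sPerm i * sPerm j * sPerm i = sPerm j * sPerm i * sPerm j := by
  have d1 : lo j = hi i := by simp [lo, hi, h]
  have d2 : lo i ≠ hi i := by simp [lo, hi]
  have d3 : lo i ≠ hi j := by simp [lo, hi]; omega
  have d4 : hi i ≠ hi j := by simp [hi]; omega
  simp only [sPerm, d1]
  rw [Equiv.swap_mul_swap_mul_swap d2 d3, Equiv.swap_comm (lo i) (hi i),
    Equiv.swap_comm (hi i) (hi j), Equiv.swap_mul_swap_mul_swap d4.symm d3.symm, Equiv.swap_comm]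

theorem hom_of_cox {n : ℕ} (hn : 1 ≤ n) {T : Type} [Monoid T] (σ : Fin (n-1) → T)
    (h1 : ∀ i, σ i * σ i = 1)
    (h2 : ∀ i j : Fin (n-1), i.1 + 1 < j.1 → σ i * σ j = σ j * σ i)
    (h3 : ∀ i j : Fin (n-1), i.1 + 1 = j.1 → σ i * σ j * σ i = σ j * σ i * σ j) :
    ∃ φ : Equiv.Perm (Fin n) →* T, ∀ i, φ (sPerm i) = σ i := by
  let s : ℕ → Equiv.Perm (Fin n) × T := fun i =>
    if h : i < n - 1 then (sPerm ⟨i, h⟩, σ ⟨i, h⟩) else 1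
  have hs : ∀ i : Fin (n-1), s i = (sPerm i, σ i) := fun i => by simp [s]
  have p1 : ∀ i : Fin (n-1), sPerm i * sPerm i = 1 := fun i => Equiv.swap_mul_self _ _
  obtain ⟨A, hf, hc, h1A, hA⟩ := cox_bound (n-1) s
    (fun i hi => by
      have := hs ⟨i, hi⟩
      simp only at this
      rw [this, Prod.mk_mul_mk, p1, h1]; rfl)
    (fun i j hi hj hij => by
      have e1 := hs ⟨i, hi⟩
      have e2 := hs ⟨j, hj⟩
      simp only at e1 e2
      rw [e1, e2, Prod.mk_mul_mk, Prod.mk_mul_mk, h2 _ _ hij]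
      rw [sPerm_comm _ _ hij])
    (fun i hi => by
      have e1 := hs ⟨i, by omega⟩
      have e2 := hs ⟨i+1, hi⟩
      simp only at e1 e2
      rw [e1, e2]
      simp only [Prod.mk_mul_mk]
      rw [h3 _ _ rfl]
      rw [sPerm_braid _ _ rfl])
  rw [show n - 1 + 1 = n by omega] at hc
  let C := Submonoid.closure (Set.range fun i : Fin (n-1) => s i)
  have hCA : ∀ c ∈ C, ∀ a ∈ A, a * c ∈ A := by
    intro c hc
    refine Submonoid.closure_induction ?_ ?_ ?_ hc
    · rintro _ ⟨i, rfl⟩ a ha; exact hA a ha i i.2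
    · intro a ha; simpa using ha
    · intro x y _ _ hx hy a ha; rw [← mul_assoc]; exact hy _ (hx _ ha)
  have hCA' : (C : Set _) ⊆ A := fun c hc => by simpa using hCA c hc 1 h1A
  have hCf : (C : Set (Equiv.Perm (Fin n) × T)).Finite := hf.subset hCA'
  let p : C →* Equiv.Perm (Fin n) := (MonoidHom.fst _ _).comp C.subtype
  have hsurj : Function.Surjective p := by
    rw [← MonoidHom.mrange_eq_top, ← top_le_iff, ← adj_closure, Submonoid.closure_le]
    rintro _ ⟨i, rfl⟩
    exact ⟨⟨s i, Submonoid.subset_closure ⟨i, rfl⟩⟩, by simp [p, hs]⟩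
  have : Finite C := hCf
  have hcard : Nat.card C ≤ Nat.card (Equiv.Perm (Fin n)) := by
    rw [Nat.card_perm, Nat.card_fin]
    exact (Set.ncard_le_ncard hCA' hf).trans hc
  have hbij : Function.Bijective p := by
    have hc2 := Nat.card_le_card_of_surjective p hsurj
    exact (Nat.bijective_iff_surjective_and_card _).2 ⟨hsurj, le_antisymm hcard hc2⟩
  let e := MulEquiv.ofBijective p hbij
  refine ⟨((MonoidHom.snd _ _).comp C.subtype).comp e.symm.toMonoidHom, fun i => ?_⟩
  have : e.symm (sPerm i) = ⟨s i, Submonoid.subset_closure ⟨i, rfl⟩⟩ := by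
    rw [MulEquiv.symm_apply_eq]
    simp [e, p, hs]
  simp [this, hs]

section ITrels
variable {n : ℕ}

theorem T_ss (i : Fin (n-1)) : σI i * σI i = 1 :=
  PresentedMonoid.mk_eq_mk_of_rel (ITRel.sigma_sq i)
theorem T_sc (i j : Fin (n-1)) (h : 1 < Nat.dist i.1 j.1) : σI i * σI j = σI j * σI i :=
  PresentedMonoid.mk_eq_mk_of_rel (ITRel.sigma_comm i j h)
theorem T_br (i j : Fin (n-1)) (h : Nat.dist i.1 j.1 = 1) :
    σI i * σI j * σI i = σI j * σI i * σI j :=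
  PresentedMonoid.mk_eq_mk_of_rel (ITRel.braid i j h)
theorem T_tt (i : Fin (n-1)) : τI i * τI i = τI i :=
  PresentedMonoid.mk_eq_mk_of_rel (ITRel.tau_idem i)
theorem T_tc (i j : Fin (n-1)) (h : i ≠ j) : τI i * τI j = τI j * τI i :=
  PresentedMonoid.mk_eq_mk_of_rel (ITRel.tau_comm i j h)
theorem T_ts (i : Fin (n-1)) : τI i * σI i = τI i :=
  PresentedMonoid.mk_eq_mk_of_rel (ITRel.tau_sigma i)
theorem T_st (i : Fin (n-1)) : σI i * τI i = τI i :=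
  PresentedMonoid.mk_eq_mk_of_rel (ITRel.sigma_tau i)
theorem T_tsc (i j : Fin (n-1)) (h : 1 < Nat.dist i.1 j.1) : τI i * σI j = σI j * τI i :=
  PresentedMonoid.mk_eq_mk_of_rel (ITRel.tau_sigma_comm i j h)
theorem T_sts (i j : Fin (n-1)) (h : Nat.dist i.1 j.1 = 1) :
    σI i * τI j * σI i = σI j * τI i * σI j :=
  PresentedMonoid.mk_eq_mk_of_rel (ITRel.sigma_tau_sigma i j h)

end ITrels

theorem exists_phi (n : ℕ) (hn : 1 ≤ n) :
    ∃ φ : Equiv.Perm (Fin n) →* ITMonoid n, ∀ i, φ (sPerm i) = σI i := by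
  apply hom_of_cox hn
  · exact T_ss
  · intro i j h; apply T_sc; simp only [Nat.dist]; omega
  · intro i j h; apply T_br; simp only [Nat.dist]; omega

theorem swap_mem_trans {α : Type} [DecidableEq α] (C : Submonoid (Equiv.Perm α)) {a b c : α}
    (h1 : Equiv.swap a b ∈ C) (h2 : Equiv.swap b c ∈ C) : Equiv.swap a c ∈ C := by
  by_cases hab : a = b
  · subst hab; exact h2
  by_cases hac : a = c
  · subst hac; rw [Equiv.swap_self]; exact C.one_mem
  rw [Equiv.swap_comm a c, ← Equiv.swap_mul_swap_mul_swap hab hac]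
  exact C.mul_mem (C.mul_mem h2 h1) h2

theorem stab_comm (n : ℕ) (h2 : 0 < n - 1) (φ : Equiv.Perm (Fin n) →* ITMonoid n)
    (hφ : ∀ i, φ (sPerm i) = σI i) (u : Equiv.Perm (Fin n))
    (hu0 : u (lo ⟨0, h2⟩) = lo ⟨0, h2⟩) (hu1 : u (hi ⟨0, h2⟩) = hi ⟨0, h2⟩) :
    φ u * τI ⟨0, h2⟩ = τI ⟨0, h2⟩ * φ u := by
  let C : Submonoid (Equiv.Perm (Fin n)) :=
    { carrier := {u | φ u * τI ⟨0, h2⟩ = τI ⟨0, h2⟩ * φ u}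
      one_mem' := by simp
      mul_mem' := by
        intro a b ha hb
        simp only [Set.mem_ofPred_eq, map_mul] at *
        rw [mul_assoc, hb, ← mul_assoc, ha, mul_assoc] }
  have hadj : ∀ i : Fin (n-1), 2 ≤ i.1 → Equiv.swap (lo i) (hi i) ∈ C := by
    intro i h
    change φ (sPerm i) * _ = _ * φ (sPerm i)
    rw [hφ, T_tsc]
    simp only [Nat.dist]; omega
  have h2a : ∀ k : ℕ, ∀ hk2 : 2 ≤ k, ∀ hk : k < n,
      Equiv.swap (⟨2, by omega⟩ : Fin n) ⟨k, hk⟩ ∈ C := by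
    intro k h
    induction k, h using Nat.le_induction with
    | base => intro hk; rw [Equiv.swap_self]; exact C.one_mem
    | succ k h ih =>
      intro hk
      exact swap_mem_trans C (ih (by omega)) (hadj ⟨k, by omega⟩ h)
  have key : u ∈ C := by
    refine perm_gen (fun a b => a = b ∨ (2 ≤ a.1 ∧ 2 ≤ b.1)) ?_ C ?_ u ?_
    · refine ⟨fun a => Or.inl rfl, fun h => ?_, fun h h' => ?_⟩
      · rcases h with rfl | h
        · exact Or.inl rfl
        · exact Or.inr ⟨h.2, h.1⟩
      · rcases h with rfl | h
        · exact h'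
        · rcases h' with rfl | h'
          · exact Or.inr h
          · exact Or.inr ⟨h.1, h'.2⟩
    · rintro a b hab (h | h)
      · exact absurd h hab
      · refine swap_mem_trans C (b := ⟨2, by omega⟩) ?_ (h2a b.1 h.2 b.2)
        rw [Equiv.swap_comm]
        exact h2a a.1 h.1 a.2
    · intro a
      by_cases h0 : a = lo ⟨0, h2⟩
      · left; rw [h0, hu0]
      by_cases h1 : a = hi ⟨0, h2⟩
      · left; rw [h1, hu1]
      right
      have k0 : u a ≠ lo ⟨0, h2⟩ := fun e => h0 (u.injective (e.trans hu0.symm))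
      have k1 : u a ≠ hi ⟨0, h2⟩ := fun e => h1 (u.injective (e.trans hu1.symm))
      simp only [lo, hi, ne_eq, Fin.ext_iff] at h0 h1 k0 k1
      omega
  exact key

theorem exists_pair {n : ℕ} {a b c d : Fin n} (h : a ≠ b) (h' : c ≠ d) :
    ∃ g : Equiv.Perm (Fin n), g a = c ∧ g b = d := by
  obtain ⟨g, hg⟩ := exists_perm_ext ![a, b] ![c, d]
    (by intro i j; fin_cases i <;> fin_cases j <;> simp [h, h.symm])
    (by intro i j; fin_cases i <;> fin_cases j <;> simp [h', h'.symm])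
  exact ⟨g, hg 0, hg 1⟩

theorem lo_ne_hi {n : ℕ} (i : Fin (n-1)) : lo i ≠ hi i := by
  simp [lo, hi]

theorem phi_cancel {n : ℕ} {T : Type} [Monoid T] (φ : Equiv.Perm (Fin n) →* T)
    (g : Equiv.Perm (Fin n)) {x y : T} (h : x * φ g = y * φ g) : x = y := by
  have := congrArg (· * φ g⁻¹) h
  simpa [mul_assoc, ← map_mul] using this

theorem exists_data (n : ℕ) (hn : 1 ≤ n) :
    ∃ (φ : Equiv.Perm (Fin n) →* ITMonoid n) (t : Fin n → Fin n → ITMonoid n),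
      (∀ i, φ (sPerm i) = σI i) ∧ (∀ i, t (lo i) (hi i) = τI i) ∧
      (∀ g a b, φ g * t a b = t (g a) (g b) * φ g) ∧ (∀ a, t a a = 1) := by
  classical
  obtain ⟨φ, hφ⟩ := exists_phi n hn
  by_cases h2 : 0 < n - 1
  swap
  · refine ⟨φ, fun _ _ => 1, hφ, ?_, by simp, by simp⟩
    intro i; have := i.2; omega
  let pg : ∀ a b : Fin n, a ≠ b → ∃ g : Equiv.Perm (Fin n),
    g (lo ⟨0, h2⟩) = a ∧ g (hi ⟨0, h2⟩) = b := fun a b h => exists_pair (lo_ne_hi _) h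
  choose! G hG using pg
  let t : Fin n → Fin n → ITMonoid n := fun a b =>
    if a = b then 1 else φ (G a b) * τI ⟨0, h2⟩ * φ (G a b)⁻¹
  have ht : ∀ g : Equiv.Perm (Fin n),
      t (g (lo ⟨0, h2⟩)) (g (hi ⟨0, h2⟩)) * φ g = φ g * τI ⟨0, h2⟩ := by
    intro g
    have hne : g (lo ⟨0, h2⟩) ≠ g (hi ⟨0, h2⟩) := fun e => lo_ne_hi _ (g.injective e)
    obtain ⟨e1, e2⟩ := hG _ _ hne
    set k := G (g (lo ⟨0, h2⟩)) (g (hi ⟨0, h2⟩)) with hk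
    have := stab_comm n h2 φ hφ (k⁻¹ * g) (by simp [← e1]) (by simp [← e2])
    simp only [t, if_neg hne, ← hk]
    rw [mul_assoc, ← map_mul, mul_assoc, ← this, ← mul_assoc, ← map_mul]
    simp
  have hconj : ∀ g a b, φ g * t a b = t (g a) (g b) * φ g := by
    intro g a b
    by_cases hab : a = b
    · subst hab; simp [t]
    · obtain ⟨e1, e2⟩ := hG a b hab
      apply phi_cancel φ (G a b)
      have k1 := ht (G a b)
      have k2 := ht (g * G a b)
      simp only [Equiv.Perm.mul_apply, e1, e2, map_mul] at k1 k2
      rw [mul_assoc, k1, mul_assoc, k2, mul_assoc]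
  refine ⟨φ, t, hφ, ?_, hconj, fun a => by simp [t]⟩
  have : ∀ i : ℕ, ∀ h : i < n - 1, t (lo ⟨i, h⟩) (hi ⟨i, h⟩) = τI ⟨i, h⟩ := by
    intro i
    induction i with
    | zero => intro h; simpa using ht 1
    | succ i ih =>
      intro h
      have h' : i < n - 1 := by omega
      have := hconj (sPerm ⟨i, h'⟩ * sPerm ⟨i+1, h⟩) (lo ⟨i, h'⟩) (hi ⟨i, h'⟩)
      rw [ih h'] at this
      have a1 : (sPerm ⟨i, h'⟩ * sPerm ⟨i+1, h⟩) (lo ⟨i, h'⟩) = lo ⟨i+1, h⟩ := by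
        rw [Equiv.Perm.mul_apply, sPerm, sPerm, Equiv.swap_apply_of_ne_of_ne (a := lo ⟨i+1, h⟩),
          Equiv.swap_apply_left]
        · rfl
        · simp [lo]
        · simp [lo, hi]; omega
      have a2 : (sPerm ⟨i, h'⟩ * sPerm ⟨i+1, h⟩) (hi ⟨i, h'⟩) = hi ⟨i+1, h⟩ := by
        rw [Equiv.Perm.mul_apply]
        have : sPerm ⟨i+1, h⟩ (hi (n := n) ⟨i, h'⟩) = hi ⟨i+1, h⟩ := Equiv.swap_apply_left _ _
        rw [this, sPerm, Equiv.swap_apply_of_ne_of_ne]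
        · simp [lo, hi]; omega
        · simp [hi]
      rw [a1, a2] at this
      have hd : Nat.dist (⟨i, h'⟩ : Fin (n-1)).1 (⟨i+1, h⟩ : Fin (n-1)).1 = 1 := by
        simp [Nat.dist]
      have r := T_sts _ _ hd
      apply phi_cancel φ (sPerm ⟨i, h'⟩ * sPerm ⟨i+1, h⟩)
      rw [← this, map_mul, hφ, hφ]
      set s := σI (n := n) ⟨i, h'⟩
      set s' := σI (n := n) ⟨i+1, h⟩
      have q1 : s * s = 1 := T_ss _
      have q2 : s' * s' = 1 := T_ss _
      calc s * s' * τI ⟨i, h'⟩ = s * (s' * τI ⟨i, h'⟩ * s') * s' := by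
            simp only [mul_assoc, q2, mul_one]
        _ = (s * s) * τI ⟨i+1, h⟩ * (s * s') := by rw [← r]; simp only [mul_assoc]
        _ = _ := by rw [q1, one_mul]
  exact fun i => this i.1 i.2

theorem exists_triple {n : ℕ} {a b c a' b' c' : Fin n} (hab : a ≠ b) (hac : a ≠ c) (hbc : b ≠ c)
    (hab' : a' ≠ b') (hac' : a' ≠ c') (hbc' : b' ≠ c') :
    ∃ g : Equiv.Perm (Fin n), g a = a' ∧ g b = b' ∧ g c = c' := by
  obtain ⟨g, hg⟩ := exists_perm_ext ![a, b, c] ![a', b', c']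
    (by intro i j; fin_cases i <;> fin_cases j <;>
          simp [hab, hac, hbc, hab.symm, hac.symm, hbc.symm])
    (by intro i j; fin_cases i <;> fin_cases j <;>
          simp [hab', hac', hbc', hab'.symm, hac'.symm, hbc'.symm])
  exact ⟨g, hg 0, hg 1, hg 2⟩

section derived
variable {n : ℕ} (φ : Equiv.Perm (Fin n) →* ITMonoid n) (t : Fin n → Fin n → ITMonoid n)
  (hφ : ∀ i, φ (sPerm i) = σI i) (ht : ∀ i, t (lo i) (hi i) = τI i)
  (hc : ∀ g a b, φ g * t a b = t (g a) (g b) * φ g) (h1 : ∀ a, t a a = 1)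

include hφ ht hc h1

theorem d_basic (a b : Fin n) : t a b * t a b = t a b ∧ t a b * φ (Equiv.swap a b) = t a b ∧
    φ (Equiv.swap a b) * t a b = t a b := by
  by_cases hab : a = b
  · subst hab; simp [h1, Equiv.swap_self, ← Equiv.Perm.one_def]
  have hn : 0 < n - 1 := by
    have := a.2; have := b.2; have : a.1 ≠ b.1 := fun e => hab (Fin.ext e); omega
  obtain ⟨g, ga, gb⟩ := exists_pair (lo_ne_hi ⟨0, hn⟩) hab
  have e := hc g (lo ⟨0, hn⟩) (hi ⟨0, hn⟩)
  rw [ga, gb, ht] at e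
  have es : φ (Equiv.swap a b) * φ g = φ g * σI ⟨0, hn⟩ := by
    rw [← hφ, ← map_mul, ← map_mul, sPerm, Equiv.mul_swap_eq_swap_mul, ga, gb]
  refine ⟨?_, ?_, ?_⟩ <;> apply phi_cancel φ g
  · rw [mul_assoc, ← e, ← mul_assoc, ← e, mul_assoc, T_tt]
  · rw [mul_assoc, es, ← mul_assoc, ← e, mul_assoc, T_ts]
  · rw [mul_assoc, ← e, ← mul_assoc, es, mul_assoc, T_st]

theorem d_symm (a b : Fin n) : t a b = t b a := by
  obtain ⟨_, k2, _⟩ := d_basic φ t hφ ht hc h1 b a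
  obtain ⟨_, _, k3⟩ := d_basic φ t hφ ht hc h1 a b
  have := hc (Equiv.swap a b) a b
  rw [k3, Equiv.swap_apply_left, Equiv.swap_apply_right, Equiv.swap_comm, k2] at this
  exact this

theorem d_triple {a b c : Fin n} (hab : a ≠ b) (hac : a ≠ c) (hbc : b ≠ c) :
    t a b * t b c = t b c * t a b ∧ t a b * t b c * t a c = t a b * t b c := by
  have hn : 1 < n - 1 := by
    have := a.2; have := b.2; have := c.2
    rw [Ne, Fin.ext_iff] at hab hac hbc; omega
  have hn0 : 0 < n - 1 := by omega
  obtain ⟨g, ga, gb, gc⟩ := exists_triple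
    (a := lo ⟨0, hn0⟩) (b := hi ⟨0, hn0⟩) (c := hi ⟨1, hn⟩) (by simp [lo, hi]) (by simp [lo, hi])
    (by simp [hi]) hab hac hbc
  have e1 := hc g (lo ⟨0, hn0⟩) (hi ⟨0, hn0⟩)
  have e2 := hc g (lo ⟨1, hn⟩) (hi ⟨1, hn⟩)
  have hl : lo (n := n) ⟨1, hn⟩ = hi ⟨0, hn0⟩ := rfl
  rw [ga, gb, ht] at e1
  rw [hl, gb, gc, ← hl, ht] at e2
  have e3 : φ (Equiv.swap a b) * t a c = t b c * φ (Equiv.swap a b) := by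
    rw [hc, Equiv.swap_apply_left, Equiv.swap_apply_of_ne_of_ne hac.symm hbc.symm]
  have comm : t a b * t b c = t b c * t a b := by
    apply phi_cancel φ g
    rw [mul_assoc, ← e2, ← mul_assoc, ← e1, mul_assoc, mul_assoc, ← e1, ← mul_assoc _ (φ g), ← e2,
      mul_assoc, T_tc _ _ (by simp)]
  refine ⟨comm, ?_⟩
  obtain ⟨i1, s1, _⟩ := d_basic φ t hφ ht hc h1 a b
  obtain ⟨i2, s2, _⟩ := d_basic φ t hφ ht hc h1 b c
  have ab : t a b * t b c * φ (Equiv.swap a b) = t a b * t b c := by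
    rw [comm, mul_assoc, s1]
  calc t a b * t b c * t a c = (t a b * t b c * φ (Equiv.swap a b)) * t a c := by rw [ab]
    _ = t a b * t b c * t b c * φ (Equiv.swap a b) := by rw [mul_assoc _ (φ _), e3, ← mul_assoc]
    _ = t a b * t b c := by rw [mul_assoc (t a b), i2, ab]

theorem d_comm (a b c d : Fin n) : t a b * t c d = t c d * t a b := by
  have sy := d_symm φ t hφ ht hc h1
  by_cases hab : a = b
  · subst hab; simp [h1]
  by_cases hcd : c = d
  · subst hcd; simp [h1]
  by_cases hac : a = c
  · subst hac
    by_cases hbd : b = d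
    · subst hbd; rfl
    rw [sy a b]; exact (d_triple φ t hφ ht hc h1 (Ne.symm hab) hbd hcd).1
  by_cases had : a = d
  · subst had
    by_cases hbc : b = c
    · subst hbc; rw [sy a b]
    rw [sy a b, sy c a]; exact (d_triple φ t hφ ht hc h1 (Ne.symm hab) hbc hac).1
  by_cases hbc : b = c
  · subst hbc
    exact (d_triple φ t hφ ht hc h1 hab had hcd).1
  by_cases hbd : b = d
  · subst hbd
    rw [sy c b]
    exact (d_triple φ t hφ ht hc h1 hab hac hbc).1
  have hn : 2 < n - 1 := by
    have := a.2; have := b.2; have := c.2; have := d.2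
    rw [Fin.ext_iff] at hab hac hbc had hbd hcd; omega
  have hn0 : 0 < n - 1 := by omega
  obtain ⟨g, hg⟩ := exists_perm_ext ![lo (n := n) ⟨0, hn0⟩, hi ⟨0, hn0⟩, lo ⟨2, hn⟩, hi ⟨2, hn⟩]
    ![a, b, c, d]
    (by intro i j; fin_cases i <;> fin_cases j <;> simp [lo, hi])
    (by
      have : ∀ {x y : Fin n}, x ≠ y → y ≠ x := fun h => h.symm
      intro i j; fin_cases i <;> fin_cases j <;>
          simp [hab, hac, hbc, had, hbd, hcd, Ne.symm hab, Ne.symm hac, Ne.symm hbc,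
            Ne.symm had, Ne.symm hbd, Ne.symm hcd])
  have ga : g (lo ⟨0, hn0⟩) = a := hg 0
  have gb : g (hi ⟨0, hn0⟩) = b := hg 1
  have gc : g (lo ⟨2, hn⟩) = c := hg 2
  have gd : g (hi ⟨2, hn⟩) = d := hg 3
  have e1 := hc g (lo ⟨0, hn0⟩) (hi ⟨0, hn0⟩)
  have e2 := hc g (lo ⟨2, hn⟩) (hi ⟨2, hn⟩)
  rw [ga, gb, ht] at e1
  rw [gc, gd, ht] at e2
  apply phi_cancel φ g
  rw [mul_assoc, ← e2, ← mul_assoc, ← e1, mul_assoc, mul_assoc, ← e1, ← mul_assoc _ (φ g), ← e2,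
    mul_assoc, T_tc _ _ (by simp)]

end derived

section action
open Equiv

/-- the setoid generated by one pair -/
def prS {n : ℕ} (a b : Fin n) : Setoid (Fin n) := sInf {S | S a b}

theorem prS_le {n : ℕ} {a b : Fin n} {S : Setoid (Fin n)} : prS a b ≤ S ↔ S a b := by
  constructor
  · intro h
    apply h
    intro S hS
    exact hS
  · intro h; exact sInf_le h

theorem sup_prS {n : ℕ} {a b : Fin n} {R S : Setoid (Fin n)} :
    R ⊔ prS a b ≤ S ↔ R ≤ S ∧ S a b := by
  rw [sup_le_iff, prS_le]

theorem sup_prS_self {n : ℕ} (a b : Fin n) (R : Setoid (Fin n)) :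
    R ≤ R ⊔ prS a b ∧ (R ⊔ prS a b) a b := sup_prS.1 le_rfl

/-- equivalence on pairs -/
def qS (n : ℕ) : Setoid (Setoid (Fin n) × Perm (Fin n)) where
  r p q := p.1 = q.1 ∧ ∀ i, p.1 (p.2 i) (q.2 i)
  iseqv := ⟨fun p => ⟨rfl, fun i => p.1.refl _⟩,
    fun {p q} h => ⟨h.1.symm, fun i => h.1 ▸ p.1.symm (h.2 i)⟩,
    fun {p q r} h h' => ⟨h.1.trans h'.1, fun i =>
      p.1.trans (h.2 i) (by have := h'.2 i; rw [← h.1] at this; exact this)⟩⟩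

/-- the model of `IT_n` -/
abbrev QQ (n : ℕ) := Quotient (qS n)

def mkQ {n : ℕ} (R : Setoid (Fin n)) (g : Perm (Fin n)) : QQ n := Quotient.mk (qS n) (R, g)

theorem mkQ_eq {n : ℕ} {R S : Setoid (Fin n)} {g h : Perm (Fin n)} :
    mkQ R g = mkQ S h ↔ R = S ∧ ∀ i, R (g i) (h i) := Quotient.eq

theorem QQ_ind {n : ℕ} {P : QQ n → Prop} (h : ∀ R g, P (mkQ R g)) (q : QQ n) : P q :=
  Quotient.ind (fun p => h p.1 p.2) q

def actS {n : ℕ} (h : Perm (Fin n)) : QQ n → QQ n :=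
  Quotient.map' (s₁ := qS n) (s₂ := qS n) (fun p => (p.1, p.2 * h))
    (fun _ _ hpq => ⟨hpq.1, fun i => hpq.2 (h i)⟩)

theorem join_congr {n : ℕ} {R : Setoid (Fin n)} {a b c d : Fin n} (h : R a c) (h' : R b d) :
    R ⊔ prS a b = R ⊔ prS c d := by
  apply le_antisymm
  · obtain ⟨h1, h2⟩ := sup_prS_self c d R
    rw [sup_prS]
    exact ⟨h1, Setoid.trans' _ (h1 h) (Setoid.trans' _ h2 (Setoid.symm' _ (h1 h')))⟩
  · obtain ⟨h1, h2⟩ := sup_prS_self a b R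
    rw [sup_prS]
    exact ⟨h1, Setoid.trans' _ (h1 (Setoid.symm' _ h)) (Setoid.trans' _ h2 (h1 h'))⟩

def actT {n : ℕ} (a b : Fin n) : QQ n → QQ n :=
  Quotient.map' (s₁ := qS n) (s₂ := qS n) (fun p => (p.1 ⊔ prS (p.2 a) (p.2 b), p.2))
    (fun p q hpq => by
      refine ⟨?_, fun i => ?_⟩
      · change _ = q.1 ⊔ _
        rw [← hpq.1]
        exact join_congr (hpq.2 a) (hpq.2 b)
      · exact (sup_prS_self _ _ _).1 (hpq.2 i))

variable {n : ℕ}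

@[simp] theorem actS_mk (h : Perm (Fin n)) (R g) : actS h (mkQ R g) = mkQ R (g * h) := rfl
@[simp] theorem actT_mk (a b : Fin n) (R g) :
    actT a b (mkQ R g) = mkQ (R ⊔ prS (g a) (g b)) g := rfl

theorem prS_symm (a b : Fin n) : prS a b = prS b a := by
  apply le_antisymm <;> rw [prS_le]
  · exact Setoid.symm' _ (prS_le.1 le_rfl)
  · exact Setoid.symm' _ (prS_le.1 le_rfl)

theorem actT_symm (a b : Fin n) (q : QQ n) : actT a b q = actT b a q := by
  induction q using QQ_ind with | _ R g
  rw [actT_mk, actT_mk, prS_symm]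

theorem actS_actS (h k : Perm (Fin n)) (q : QQ n) : actS h (actS k q) = actS (k * h) q := by
  induction q using QQ_ind with | _ R g
  simp [mul_assoc]

theorem actS_one (q : QQ n) : actS 1 q = q := by
  induction q using QQ_ind with | _ R g
  simp

theorem actT_actS (h : Perm (Fin n)) (a b : Fin n) (q : QQ n) :
    actT a b (actS h q) = actS h (actT (h a) (h b) q) := by
  induction q using QQ_ind with | _ R g
  simp

theorem actT_comm (a b c d : Fin n) (q : QQ n) :
    actT a b (actT c d q) = actT c d (actT a b q) := by
  induction q using QQ_ind with | _ R g
  simp [sup_right_comm]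

theorem actT_idem (a b : Fin n) (q : QQ n) :
    actT a b (actT a b q) = actT a b q := by
  induction q using QQ_ind with | _ R g
  simp

theorem rel_swap {R : Setoid (Fin n)} {g : Perm (Fin n)} {a b : Fin n} (h : R (g a) (g b))
    (i : Fin n) : R ((g * swap a b) i) (g i) := by
  rw [Perm.mul_apply, swap_apply_def]
  split_ifs with e1 e2
  · rw [e1]; exact Setoid.symm' _ h
  · rw [e2]; exact h
  · exact Setoid.refl' _ _

theorem actS_swap (a b : Fin n) (q : QQ n) :
    actS (swap a b) (actT a b q) = actT a b q := by
  induction q using QQ_ind with | _ R g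
  rw [actT_mk, actS_mk, mkQ_eq]
  exact ⟨rfl, rel_swap (sup_prS_self _ _ _).2⟩

theorem act_tst (a b c : Fin n) (q : QQ n) :
    actS (swap b c) (actT a c (actT a b q)) = actT b c (actT a b q) := by
  induction q using QQ_ind with | _ R g
  simp only [actT_mk, actS_mk, mkQ_eq]
  obtain ⟨h1, h2⟩ := sup_prS_self (g a) (g b) R
  obtain ⟨h3, h4⟩ := sup_prS_self (g a) (g c) (R ⊔ prS (g a) (g b))
  obtain ⟨h5, h6⟩ := sup_prS_self (g b) (g c) (R ⊔ prS (g a) (g b))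
  constructor
  · apply le_antisymm
    · rw [sup_prS]
      exact ⟨h5, Setoid.trans' _ (h5 h2) h6⟩
    · rw [sup_prS]
      exact ⟨h3, Setoid.trans' _ (h3 (Setoid.symm' _ h2)) h4⟩
  · exact rel_swap (Setoid.trans' _ (h3 (Setoid.symm' _ h2)) h4)

theorem sP_lo (i : Fin (n-1)) : sPerm i (lo i) = hi i := swap_apply_left _ _
theorem sP_hi (i : Fin (n-1)) : sPerm i (hi i) = lo i := swap_apply_right _ _

theorem sP_fix_lo (i j : Fin (n-1)) (h : i ≠ j) (h' : i.1 ≠ j.1 + 1) : sPerm j (lo i) = lo i := by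
  apply swap_apply_of_ne_of_ne
  · simpa [lo, Fin.ext_iff] using h
  · simpa [lo, hi, Fin.ext_iff] using h'

theorem sP_fix_hi (i j : Fin (n-1)) (h : i ≠ j) (h' : i.1 + 1 ≠ j.1) : sPerm j (hi i) = hi i := by
  apply swap_apply_of_ne_of_ne
  · simpa [lo, hi, Fin.ext_iff] using h'
  · simpa [hi, Fin.ext_iff] using h

/-- images of generators -/
def actG (n : ℕ) : ITGen n → (Function.End (QQ n))ᵐᵒᵖ
  | Sum.inl i => MulOpposite.op (actS (sPerm i))
  | Sum.inr i => MulOpposite.op (actT (lo i) (hi i))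

theorem sts_aux (i j : Fin (n-1)) (h : i.1 + 1 = j.1) (q : QQ n) :
    actS (sPerm i) (actT (lo j) (hi j) (actS (sPerm i) q)) =
      actS (sPerm j) (actT (lo i) (hi i) (actS (sPerm j) q)) := by
  have hij : i ≠ j := fun e => by rw [e] at h; omega
  have e : lo j = hi i := by simp [lo, hi, h]
  have e2 : sPerm j (hi i) = hi j := by rw [← e]; exact sP_lo j
  have e3 : sPerm i (lo j) = lo i := by rw [e]; exact sP_hi i
  rw [actT_actS, actT_actS, actS_actS, actS_actS, sPerm_sq, sPerm_sq, actS_one, actS_one,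
    sP_fix_lo i j hij (by omega), sP_fix_hi j i hij.symm (by omega), e2, e3]

theorem actG_rel (n : ℕ) : ∀ a b : FreeMonoid (ITGen n), ITRel n a b →
    FreeMonoid.lift (actG n) a = FreeMonoid.lift (actG n) b := by
  intro a b h
  have dist1 : ∀ x y : ℕ, Nat.dist x y = 1 → x + 1 = y ∨ y + 1 = x := by
    intro x y; simp only [Nat.dist]; omega
  have dist2 : ∀ x y : ℕ, 1 < Nat.dist x y → x + 1 < y ∨ y + 1 < x := by
    intro x y; simp only [Nat.dist]; omega
  cases h with
  | sigma_sq i =>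
    simp only [fσ, map_mul, FreeMonoid.lift_eval_of, map_one, actG]
    apply MulOpposite.unop_injective; funext q
    change actS (sPerm i) (actS (sPerm i) q) = q
    rw [actS_actS, sPerm_sq, actS_one]
  | sigma_comm i j h =>
    simp only [fσ, map_mul, FreeMonoid.lift_eval_of, actG]
    apply MulOpposite.unop_injective; funext q
    change actS (sPerm j) (actS (sPerm i) q) = actS (sPerm i) (actS (sPerm j) q)
    rw [actS_actS, actS_actS]
    rcases dist2 _ _ h with h | h
    · rw [sPerm_comm i j h]
    · rw [sPerm_comm j i h]
  | braid i j h =>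
    simp only [fσ, map_mul, FreeMonoid.lift_eval_of, actG]
    apply MulOpposite.unop_injective; funext q
    change actS (sPerm i) (actS (sPerm j) (actS (sPerm i) q)) =
      actS (sPerm j) (actS (sPerm i) (actS (sPerm j) q))
    simp only [actS_actS]
    rcases dist1 _ _ h with h | h
    · rw [sPerm_braid i j h]
    · rw [sPerm_braid j i h]
  | tau_idem i =>
    simp only [fτ, map_mul, FreeMonoid.lift_eval_of, actG]
    apply MulOpposite.unop_injective; funext q
    exact actT_idem _ _ q
  | tau_comm i j h =>
    simp only [fτ, map_mul, FreeMonoid.lift_eval_of, actG]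
    apply MulOpposite.unop_injective; funext q
    exact actT_comm _ _ _ _ q
  | tau_sigma i =>
    simp only [fτ, fσ, map_mul, FreeMonoid.lift_eval_of, actG]
    apply MulOpposite.unop_injective; funext q
    exact actS_swap _ _ q
  | sigma_tau i =>
    simp only [fτ, fσ, map_mul, FreeMonoid.lift_eval_of, actG]
    apply MulOpposite.unop_injective; funext q
    change actT (lo i) (hi i) (actS (sPerm i) q) = actT (lo i) (hi i) q
    rw [actT_actS, sP_lo, sP_hi, actT_symm]
    exact actS_swap _ _ q
  | tau_sigma_comm i j h =>
    simp only [fτ, fσ, map_mul, FreeMonoid.lift_eval_of, actG]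
    apply MulOpposite.unop_injective; funext q
    change actS (sPerm j) (actT (lo i) (hi i) q) = actT (lo i) (hi i) (actS (sPerm j) q)
    have hij : i ≠ j := by rintro rfl; simp at h
    have := dist2 _ _ h
    rw [actT_actS, sP_fix_lo i j hij (by omega), sP_fix_hi i j hij (by omega)]
  | sigma_tau_sigma i j h =>
    simp only [fτ, fσ, map_mul, FreeMonoid.lift_eval_of, actG]
    apply MulOpposite.unop_injective; funext q
    change actS (sPerm i) (actT (lo j) (hi j) (actS (sPerm i) q)) =
      actS (sPerm j) (actT (lo i) (hi i) (actS (sPerm j) q))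
    rcases dist1 _ _ h with h | h
    · exact sts_aux i j h q
    · exact (sts_aux j i h q).symm
  | tau_sigma_tau i j h =>
    simp only [fτ, fσ, map_mul, FreeMonoid.lift_eval_of, actG]
    apply MulOpposite.unop_injective; funext q
    change actT (lo i) (hi i) (actS (sPerm j) (actT (lo i) (hi i) q)) =
      actT (lo j) (hi j) (actT (lo i) (hi i) q)
    rw [actT_actS]
    have hij : i ≠ j := by rintro rfl; simp at h
    rcases dist1 _ _ h with h | h
    · have e : lo j = hi i := by simp [lo, hi, h]
      rw [sP_fix_lo i j hij (by omega), ← e, sP_lo]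
      exact act_tst (lo i) (lo j) (hi j) q
    · have e : lo i = hi j := by simp [lo, hi, h]
      rw [sP_fix_hi i j hij (by omega), e, sP_hi, actT_symm (lo j), actT_symm (hi j) (hi i),
        actT_symm (lo j), sPerm, swap_comm]
      exact act_tst (hi i) (hi j) (lo j) q

/-- the action -/
def rho (n : ℕ) : ITMonoid n →* (Function.End (QQ n))ᵐᵒᵖ := PresentedMonoid.lift (actG n) (actG_rel n)

def act (x : ITMonoid n) (q : QQ n) : QQ n := (rho n x).unop q

theorem act_mul (x y : ITMonoid n) (q : QQ n) : act (x * y) q = act y (act x q) := by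
  simp only [act, map_mul]; rfl
theorem act_one (q : QQ n) : act (1 : ITMonoid n) q = q := by
  simp only [act, map_one]; rfl
theorem act_s (i : Fin (n-1)) (q : QQ n) : act (σI i) q = actS (sPerm i) q := rfl
theorem act_t (i : Fin (n-1)) (q : QQ n) : act (τI i) q = actT (lo i) (hi i) q := rfl

theorem act_surj (q : QQ n) : ∃ x : ITMonoid n, act x (mkQ ⊥ 1) = q := by
  classical
  let Rc : QQ n → Prop := fun q => ∃ x : ITMonoid n, act x (mkQ ⊥ 1) = q
  have r0 : Rc (mkQ ⊥ 1) := ⟨1, act_one _⟩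
  have rs : ∀ h : Perm (Fin n), ∀ q, Rc q → Rc (actS h q) := by
    intro h
    have : h ∈ Submonoid.closure (Set.range (sPerm (n := n))) := by
      rw [adj_closure]; trivial
    refine Submonoid.closure_induction ?_ ?_ ?_ this
    · rintro _ ⟨i, rfl⟩ _ ⟨x, rfl⟩
      exact ⟨x * σI i, by rw [act_mul, act_s]⟩
    · intro q hq; rwa [actS_one]
    · intro g k _ _ hg hk q hq
      rw [← actS_actS]; exact hk _ (hg _ hq)
  have rt : ∀ a b : Fin n, ∀ q, Rc q → Rc (actT a b q) := by
    intro a b q hq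
    by_cases hab : a = b
    · subst hab
      have : actT a a q = q := by
        induction q using QQ_ind with | _ R g
        rw [actT_mk]
        congr 1
        rw [sup_eq_left, prS_le]
      rwa [this]
    have hn : 0 < n - 1 := by
      have := a.2; have := b.2; have : a.1 ≠ b.1 := fun e => hab (Fin.ext e); omega
    obtain ⟨g, ga, gb⟩ := exists_pair (lo_ne_hi ⟨0, hn⟩) hab
    have : actT a b q = actS g⁻¹ (actT (lo ⟨0, hn⟩) (hi ⟨0, hn⟩) (actS g q)) := by
      rw [actT_actS, actS_actS, mul_inv_cancel, actS_one, ga, gb]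
    rw [this]
    apply rs
    obtain ⟨x, hx⟩ := rs g q hq
    exact ⟨x * τI ⟨0, hn⟩, by rw [act_mul, act_t, hx]⟩
  have rP : ∀ P : Finset (Fin n × Fin n), Rc (mkQ (P.sup fun p => prS p.1 p.2) 1) := by
    intro P
    induction P using Finset.induction_on with
    | empty => simpa using r0
    | insert p P _ ih =>
      rw [Finset.sup_insert, sup_comm]
      exact rt p.1 p.2 _ ih
  induction q using QQ_ind with | _ R g
  have hR : R = (Finset.univ.filter fun p : Fin n × Fin n => R p.1 p.2).sup
      fun p => prS p.1 p.2 := by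
    apply le_antisymm
    · intro a b hab
      have : prS a b ≤ (Finset.univ.filter fun p : Fin n × Fin n => R p.1 p.2).sup
          fun p => prS p.1 p.2 :=
        Finset.le_sup (f := fun p : Fin n × Fin n => prS p.1 p.2) (b := (a, b))
          (by simpa using hab)
      exact prS_le.1 this
    · apply Finset.sup_le
      intro p hp
      rw [prS_le]
      simpa using hp
  have := rs g _ (rP (Finset.univ.filter fun p : Fin n × Fin n => R p.1 p.2))
  rw [← hR, actS_mk, one_mul] at this
  exact this

end action

theorem list_absorb {M : Type} [Monoid M] (x : M) (l : List M) (h : ∀ y ∈ l, x * y = x) :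
    x * l.prod = x := by
  induction l with
  | nil => simp
  | cons z l ih =>
    rw [List.prod_cons, ← mul_assoc, h z (by simp), ih (fun y hy => h y (by simp [hy]))]

theorem list_mem_absorb {M : Type} [Monoid M] (y : M) (hy : y * y = y) (l : List M)
    (hc : ∀ z ∈ l, z * y = y * z) (h : y ∈ l) : l.prod * y = l.prod := by
  induction l with
  | nil => simp at h
  | cons z l ih =>
    rw [List.prod_cons]
    rcases List.mem_cons.1 h with rfl | h
    · have : l.prod * y = y * l.prod :=
        (Commute.list_prod_left l y fun z hz => hc z (by simp [hz]))
      rw [mul_assoc, this, ← mul_assoc, hy]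
    · rw [mul_assoc, ih (fun z hz => hc z (by simp [hz])) h]

theorem exists_E {n : ℕ} (φ : Equiv.Perm (Fin n) →* ITMonoid n)
    (t : Fin n → Fin n → ITMonoid n)
    (hφ : ∀ i, φ (sPerm i) = σI i) (ht : ∀ i, t (lo i) (hi i) = τI i)
    (hc : ∀ g a b, φ g * t a b = t (g a) (g b) * φ g) (h1 : ∀ a, t a a = 1) :
    ∃ E : Setoid (Fin n) → ITMonoid n, E ⊥ = 1 ∧
      (∀ R a b, E R * t a b = E (R ⊔ prS a b)) ∧
      (∀ (R : Setoid (Fin n)) g, (∀ a, R (g a) a) → E R * φ g = E R) := by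
  classical
  let l : Setoid (Fin n) → List (ITMonoid n) := fun R =>
    ((Finset.univ : Finset (Fin n × Fin n)).toList.filter (fun p => R p.1 p.2)).map
      (fun p => t p.1 p.2)
  have hl : ∀ R x, x ∈ l R ↔ ∃ a b, R a b ∧ t a b = x := by
    intro R x; simp [l]
  have comm := d_comm φ t hφ ht hc h1
  have E1 : ∀ (R : Setoid (Fin n)) a b, R a b → (l R).prod * t a b = (l R).prod := by
    intro R a b h
    apply list_mem_absorb _ (d_basic φ t hφ ht hc h1 a b).1
    · intro z hz
      obtain ⟨c, d, _, rfl⟩ := (hl R z).1 hz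
      exact comm _ _ _ _
    · exact (hl R _).2 ⟨a, b, h, rfl⟩
  have E2 : ∀ (R : Setoid (Fin n)) x, (∀ a b, R a b → x * t a b = x) → x * (l R).prod = x := by
    intro R x h
    apply list_absorb
    intro y hy
    obtain ⟨c, d, h', rfl⟩ := (hl R y).1 hy
    exact h _ _ h'
  have E3 : ∀ R a b, (l R).prod * t a b = t a b * (l R).prod := by
    intro R a b
    refine Commute.list_prod_left _ _ fun z hz => ?_
    obtain ⟨c, d, h', rfl⟩ := (hl R z).1 hz
    exact comm _ _ _ _
  have E4 : ∀ R S, (l R).prod * (l S).prod = (l S).prod * (l R).prod := by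
    intro R S
    refine Commute.list_prod_left _ _ fun z hz => ?_
    obtain ⟨c, d, h', rfl⟩ := (hl R z).1 hz
    exact (E3 S c d).symm
  refine ⟨fun R => (l R).prod, ?_, ?_, ?_⟩
  · have := E2 ⊥ 1 (by rintro a b (rfl : a = b); rw [h1, mul_one])
    simpa using this
  · intro R a b
    simp only
    obtain ⟨u1, u2⟩ := sup_prS_self a b R
    set x := (l R).prod * t a b with hx
    let S : Setoid (Fin n) :=
      { r := fun c d => x * t c d = x
        iseqv := by
          refine ⟨fun c => by rw [h1, mul_one], fun {c d} h => ?_, fun {c d e} h h' => ?_⟩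
          · rw [d_symm φ t hφ ht hc h1]; exact h
          · by_cases hcd : c = d
            · rw [hcd]; exact h'
            by_cases hde : d = e
            · rw [← hde]; exact h
            by_cases hce : c = e
            · rw [hce, h1, mul_one]
            have := (d_triple φ t hφ ht hc h1 hcd hce hde).2
            have k : x * (t c d * t d e) = x := by rw [← mul_assoc, h, h']
            calc x * t c e = x * (t c d * t d e * t c e) := by rw [← mul_assoc x, k]
              _ = x := by rw [this, k] }
    have hle : R ⊔ prS a b ≤ S := by
      rw [sup_prS]
      constructor
      · intro c d h
        change x * t c d = x
        rw [hx, mul_assoc, comm, ← mul_assoc, E1 R c d h]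
      · change x * t a b = x
        rw [hx, mul_assoc, (d_basic φ t hφ ht hc h1 a b).1]
    have k1 : x * (l (R ⊔ prS a b)).prod = x := E2 _ _ (fun c d h => hle h)
    have k2 : (l (R ⊔ prS a b)).prod * x = (l (R ⊔ prS a b)).prod := by
      rw [hx, ← mul_assoc, E2 R _ (fun c d h => E1 _ c d (u1 h)), E1 _ a b u2]
    rw [← k1, hx, mul_assoc, ← E3, ← mul_assoc, E4, mul_assoc, ← hx, k2]
  · intro R g hg
    let C : Submonoid (Equiv.Perm (Fin n)) :=
      { carrier := {u | (l R).prod * φ u = (l R).prod}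
        one_mem' := by simp
        mul_mem' := by
          intro a b ha hb
          simp only [Set.mem_ofPred_eq, map_mul] at *
          rw [← mul_assoc, ha, hb] }
    have : g ∈ C := by
      refine perm_gen (fun a b => R a b) R.iseqv C ?_ g hg
      intro a b _ h
      change (l R).prod * φ _ = _
      rw [← E1 R a b h, mul_assoc, (d_basic φ t hφ ht hc h1 a b).2.1]
    exact this

theorem T_equiv_Q (n : ℕ) (hn : 1 ≤ n) : Nonempty (ITMonoid n ≃ QQ n) := by
  obtain ⟨φ, t, hφ, ht, hc, h1⟩ := exists_data n hn
  obtain ⟨E, e1, e2, e3⟩ := exists_E φ t hφ ht hc h1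
  let F : QQ n → ITMonoid n := Quotient.lift (fun p => E p.1 * φ p.2) (by
    rintro ⟨R, g⟩ ⟨S, k⟩ ⟨h, h'⟩
    simp only at h h' ⊢
    subst h
    have : g = (g * k⁻¹) * k := by simp
    rw [this, map_mul, ← mul_assoc, e3]
    intro a
    simpa using h' (k⁻¹ a))
  have F_mk : ∀ R g, F (mkQ R g) = E R * φ g := fun R g => rfl
  have hF : ∀ x q, F (act x q) = F q * x := by
    intro x
    have : x ∈ Submonoid.closure (Set.range (PresentedMonoid.of (ITRel n))) := by
      rw [PresentedMonoid.closure_range_of]; trivial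
    refine Submonoid.closure_induction ?_ ?_ ?_ this
    · rintro _ ⟨i | i, rfl⟩ q
      · change F (act (σI i) q) = F q * σI i
        induction q using QQ_ind with | _ R g
        rw [act_s, actS_mk, F_mk, F_mk, map_mul, hφ, mul_assoc]
      · change F (act (τI i) q) = F q * τI i
        induction q using QQ_ind with | _ R g
        rw [act_t, actT_mk, F_mk, F_mk, ← e2, mul_assoc, mul_assoc, ← ht, hc]
    · intro q; rw [act_one, mul_one]
    · intro x y _ _ hx hy q
      rw [act_mul, hy, hx, mul_assoc]
  refine ⟨Equiv.ofBijective (fun x => act x (mkQ ⊥ 1)) ⟨fun x y hxy => ?_, act_surj⟩⟩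
  have := congrArg F hxy
  simpa only [hF, F_mk, e1, map_one, one_mul] using this

section counting
open Equiv

theorem equiv_of_natcard {α β : Type} [Finite α] [Finite β] (h : Nat.card α = Nat.card β) :
    Nonempty (α ≃ β) := by
  have := Fintype.ofFinite α
  have := Fintype.ofFinite β
  rw [Nat.card_eq_fintype_card, Nat.card_eq_fintype_card] at h
  exact Fintype.card_eq.1 h

theorem equiv_of_fib {α β γ : Type} [Finite α] [Finite β] (f : α → γ) (g : β → γ)
    (h : ∀ c, Nat.card {a // f a = c} = Nat.card {b // g b = c}) :
    ∃ e : α ≃ β, ∀ a, g (e a) = f a := by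
  have hE : ∀ c, Nonempty ({a // f a = c} ≃ {b // g b = c}) := fun c =>
    equiv_of_natcard (h c)
  let E : ∀ c, {a // f a = c} ≃ {b // g b = c} := fun c => (hE c).some
  refine ⟨(Equiv.sigmaFiberEquiv f).symm.trans
    ((Equiv.sigmaCongrRight E).trans (Equiv.sigmaFiberEquiv g)), fun a => ?_⟩
  exact (E (f a) ⟨a, rfl⟩).2

theorem fiber_count {X Y : Type} [Finite X] [Finite Y] (F : X → Y) (k : ℕ)
    (h : ∀ y, Nat.card {x // F x = y} = k) : Nat.card X = Nat.card Y * k := by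
  have := Fintype.ofFinite Y
  rw [Nat.card_congr (Equiv.sigmaFiberEquiv F).symm, Nat.card_sigma]
  simp [h]

theorem fib_card_count {α γ : Type} [Fintype α] [DecidableEq γ] (f : α → γ) (v : γ) :
    Nat.card {a // f a = v} = ((Finset.univ : Finset α).val.map f).count v := by
  classical
  rw [Multiset.count_map, Nat.card_eq_fintype_card, Fintype.card_subtype]
  simp only [Finset.card, Finset.filter_val, eq_comm]

theorem exists_perm_of_ker {α β γ : Type} (f : α → β) (h : α → γ)
    (hf : Function.Surjective f) (hh : Function.Surjective h)
    (hk : ∀ a b, f a = f b ↔ h a = h b) : ∃ e : β ≃ γ, ∀ a, e (f a) = h a := by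
  have key : ∀ a, h (Function.surjInv hf (f a)) = h a := fun a =>
    (hk _ _).1 (Function.surjInv_eq hf _)
  refine ⟨Equiv.ofBijective (fun b => h (Function.surjInv hf b)) ⟨?_, ?_⟩, key⟩
  · intro b b' e
    have := (hk _ _).2 e
    rwa [Function.surjInv_eq hf, Function.surjInv_eq hf] at this
  · intro c
    obtain ⟨a, rfl⟩ := hh c
    exact ⟨f a, key a⟩

variable {n : ℕ}

/-- index type of parts -/
abbrev IX (p : Nat.Partition n) : Type := p.parts.ToType

/-- the size -/
def sz (p : Nat.Partition n) (i : IX p) : ℕ := i.1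

theorem sz_map (p : Nat.Partition n) :
    (Finset.univ : Finset (IX p)).val.map (sz p) = p.parts := Multiset.map_univ_coe _

theorem sz_pos (p : Nat.Partition n) (i : IX p) : 0 < sz p i :=
  p.parts_pos (by rw [← sz_map p]; exact Multiset.mem_map_of_mem _ (Finset.mem_univ i))

/-- labelled partitions -/
abbrev AA (p : Nat.Partition n) : Type :=
  {f : Fin n → IX p // ∀ i, Nat.card {a // f a = i} = sz p i}

theorem AA_surj (p : Nat.Partition n) (f : AA p) : Function.Surjective f.1 := by
  intro i
  have h := f.2 i
  have := sz_pos p i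
  rw [← h, Nat.card_pos_iff] at this
  obtain ⟨⟨a, ha⟩⟩ := this.1
  exact ⟨a, ha⟩

theorem stab_card {α ι : Type} [Fintype α] [Fintype ι] (f : α → ι) :
    Nat.card {g : Perm α // f ∘ g = f} = ∏ i, (Nat.card {a // f a = i}).factorial := by
  classical
  simp only [Nat.card_eq_fintype_card]
  exact DomMulAct.stabilizer_card f

theorem AA_nonempty (p : Nat.Partition n) : Nonempty (AA p) := by
  have hs : ∑ i : IX p, sz p i = n := by
    rw [Finset.sum_eq_multiset_sum, sz_map, p.parts_sum]
  have hc : Nat.card (Fin n) = Nat.card (Σ i : IX p, Fin (sz p i)) := by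
    rw [Nat.card_sigma]; simp [hs]
  obtain ⟨e⟩ := equiv_of_natcard hc
  refine ⟨fun a => (e a).1, fun i => ?_⟩
  have e2 : {a // (e a).1 = i} ≃ {x : (Σ i : IX p, Fin (sz p i)) // x.1 = i} :=
    Equiv.subtypeEquiv e (fun a => Iff.rfl)
  rw [Nat.card_congr e2, Nat.card_congr (Equiv.sigmaSubtype i), Nat.card_fin]

theorem AA_card (p : Nat.Partition n) :
    Nat.card (AA p) * ∏ i : IX p, (sz p i).factorial = n.factorial := by
  obtain ⟨f0⟩ := AA_nonempty p
  let F : Perm (Fin n) → AA p := fun g => ⟨f0.1 ∘ g, fun i => by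
    rw [← f0.2 i]
    exact Nat.card_congr (Equiv.subtypeEquiv g fun a => Iff.rfl)⟩
  have := fiber_count F (∏ i : IX p, (sz p i).factorial) (fun f1 => by
    obtain ⟨g1, hg1⟩ := equiv_of_fib f1.1 f0.1 (fun c => by rw [f0.2, f1.2])
    have e : {g // F g = f1} ≃ {g : Perm (Fin n) // f0.1 ∘ g = f0.1} :=
      Equiv.subtypeEquiv (Equiv.mulRight g1⁻¹) (fun g => by
        rw [Subtype.ext_iff, funext_iff, funext_iff]
        constructor
        · intro h a
          have := h (g1⁻¹ a)
          simp only [F, Function.comp] at this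
          rw [← hg1] at this
          simpa using this
        · intro h a
          have := h (g1 a)
          simp only [Function.comp, hg1] at this
          simpa [F] using this)
    rw [Nat.card_congr e, stab_card]
    simp only [f0.2])
  rw [← this, Nat.card_perm, Nat.card_fin]

theorem S_card (p : Nat.Partition n) :
    Nat.card {e : Perm (IX p) // sz p ∘ e = sz p} =
      ∏ i ∈ Finset.Icc 1 n, (p.parts.count i).factorial := by
  classical
  rw [Nat.card_eq_fintype_card, DomMulAct.stabilizer_card']
  have : ∀ v, Fintype.card {a // sz p a = v} = p.parts.count v := by
    intro v
    rw [← Nat.card_eq_fintype_card, fib_card_count, sz_map]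
  simp only [this]
  apply Finset.prod_subset
  · intro v hv
    rw [Finset.mem_image] at hv
    obtain ⟨i, _, rfl⟩ := hv
    rw [Finset.mem_Icc]
    refine ⟨sz_pos p i, Nat.Partition.le_of_mem_parts (p := p) ?_⟩
    rw [← sz_map p]; exact Multiset.mem_map_of_mem _ (Finset.mem_univ i)
  · intro v _ hv
    rw [Multiset.count_eq_zero_of_notMem, Nat.factorial_zero]
    rw [← sz_map p]
    intro h
    obtain ⟨i, _, hi⟩ := Multiset.mem_map.1 h
    exact hv (Finset.mem_image.2 ⟨i, Finset.mem_univ _, hi⟩)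

theorem sz_prod (p : Nat.Partition n) :
    ∏ i : IX p, (sz p i).factorial = ∏ i ∈ Finset.Icc 1 n, i.factorial ^ p.parts.count i := by
  have : ∏ i : IX p, (sz p i).factorial = (p.parts.map Nat.factorial).prod := by
    have h := congrArg (fun m => (Multiset.map Nat.factorial m).prod) (sz_map p)
    simp only [Multiset.map_map] at h
    exact h
  rw [this, Finset.prod_multiset_map_count]
  apply Finset.prod_subset
  · intro v hv
    rw [Multiset.mem_toFinset] at hv
    rw [Finset.mem_Icc]
    exact ⟨p.parts_pos hv, Nat.Partition.le_of_mem_parts hv⟩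
  · intro v _ hv
    rw [Multiset.mem_toFinset] at hv
    rw [Multiset.count_eq_zero_of_notMem hv, pow_zero]

theorem AA_perm (p : Nat.Partition n) (f f' : AA p) :
    ∃ g : Perm (Fin n), ∀ a, f.1 (g a) = f'.1 a :=
  equiv_of_fib f'.1 f.1 (fun c => by rw [f.2, f'.2])

/-- pairs to the model -/
noncomputable def PP (p : Nat.Partition n) (w : AA p × AA p) : QQ n :=
  mkQ (Setoid.ker w.1.1) (AA_perm p w.1 w.2).choose

theorem PP_eq (p : Nat.Partition n) (f f' : AA p) (R : Setoid (Fin n)) (g : Perm (Fin n)) :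
    PP p (f, f') = mkQ R g ↔ (∀ a b, f.1 a = f.1 b ↔ R a b) ∧ ∀ a, f.1 (g a) = f'.1 a := by
  have hs := (AA_perm p f f').choose_spec
  rw [PP, mkQ_eq]
  simp only [Setoid.ker_def] 
  refine and_congr ?_ ?_
  · rw [Setoid.ext_iff]; rfl
  · refine forall_congr' fun a => ?_
    rw [hs]; exact eq_comm

instance : Finite (Setoid (Fin n)) :=
  Finite.of_injective (fun (S : Setoid (Fin n)) a b => S a b) (fun S S' h => by
    ext a b
    exact iff_of_eq (congrFun (congrFun h a) b))

theorem PP_fiber (p : Nat.Partition n) (w : AA p × AA p) :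
    Nat.card {w' // PP p w' = PP p w} = Nat.card {e : Perm (IX p) // sz p ∘ e = sz p} := by
  obtain ⟨f, f'⟩ := w
  obtain ⟨g, hg⟩ := AA_perm p f f'
  have hw : PP p (f, f') = mkQ (Setoid.ker f.1) g := (PP_eq _ _ _ _ _).2 ⟨fun a b => Iff.rfl, hg⟩
  have mem : ∀ (e : Perm (IX p)), sz p ∘ e = sz p → ∀ f : AA p,
      ∀ i, Nat.card {a // e (f.1 a) = i} = sz p i := by
    intro e he f i
    have h1 := f.2 (e.symm i)
    have h2 : sz p (e.symm i) = sz p i := by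
      have := congrFun he (e.symm i)
      simpa using this.symm
    rw [← h2, ← h1]
    exact Nat.card_congr (Equiv.subtypeEquiv (Equiv.refl _) fun a => by
      simp [Equiv.eq_symm_apply])
  symm
  let B : {e : Perm (IX p) // sz p ∘ e = sz p} → {w' // PP p w' = PP p (f, f')} := fun e =>
    ⟨(⟨fun a => e.1 (f.1 a), mem e.1 e.2 f⟩, ⟨fun a => e.1 (f'.1 a), mem e.1 e.2 f'⟩), by
      rw [hw, PP_eq]
      refine ⟨fun a b => ?_, fun a => ?_⟩
      · simp [Setoid.ker_def]
      · simp [hg]⟩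
  refine Nat.card_eq_of_bijective B ⟨?_, ?_⟩
  · intro e e' h
    apply Subtype.ext
    ext1 i
    obtain ⟨a, rfl⟩ := AA_surj p f i
    have h2 := congrArg (fun z => z.1.1.1 a) h
    exact h2
  · rintro ⟨⟨f1, f1'⟩, h⟩
    rw [hw, PP_eq] at h
    obtain ⟨e, he⟩ := exists_perm_of_ker f.1 f1.1 (AA_surj p f) (AA_surj p f1)
      (fun a b => (h.1 a b).symm)
    refine ⟨⟨e, ?_⟩, ?_⟩
    · funext i
      change sz p (e i) = sz p i
      rw [← f1.2, ← f.2]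
      exact Nat.card_congr (Equiv.subtypeEquiv (Equiv.refl _) fun a => by
        simp [← he])
    · apply Subtype.ext
      apply Prod.ext
      · apply Subtype.ext; funext a; exact he a
      · apply Subtype.ext; funext a
        change e (f'.1 a) = f1'.1 a
        rw [← hg, he, h.2]

theorem range_card (p : Nat.Partition n) :
    Nat.card (AA p) * Nat.card (AA p) = Nat.card (Set.range (PP p)) *
      ∏ i ∈ Finset.Icc 1 n, (p.parts.count i).factorial := by
  rw [← S_card, ← Nat.card_prod]
  refine fiber_count (Set.rangeFactorization (PP p)) _ ?_
  rintro ⟨_, w, rfl⟩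
  rw [← PP_fiber p w]
  exact Nat.card_congr (Equiv.subtypeEquiv (Equiv.refl _) fun a => by
    rw [Subtype.ext_iff]; rfl)

theorem PP_disj (p p' : Nat.Partition n) (w : AA p × AA p) (w' : AA p' × AA p')
    (h : PP p w = PP p' w') : p = p' := by
  obtain ⟨f, f'⟩ := w
  obtain ⟨f1, f1'⟩ := w'
  have h' := (PP_eq p f f' _ _).1 h
  obtain ⟨e, he⟩ := exists_perm_of_ker f.1 f1.1 (AA_surj p f) (AA_surj p' f1) h'.1
  have hs : sz p = sz p' ∘ e := by
    funext i
    change _ = sz p' (e i)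
    rw [← f1.2, ← f.2]
    exact Nat.card_congr (Equiv.subtypeEquiv (Equiv.refl _) fun a => by
        simp [← he])
  apply Nat.Partition.ext
  rw [← sz_map p, ← sz_map p', hs, ← Multiset.map_map, Multiset.map_univ_val_equiv]

theorem PP_cover (q : QQ n) : ∃ (p : Nat.Partition n) (w : AA p × AA p), PP p w = q := by
  classical
  induction q using QQ_ind with | _ R g
  let size : Quotient R → ℕ := fun c => Nat.card {a // Quotient.mk R a = c}
  have := Fintype.ofFinite (Quotient R)
  let p : Nat.Partition n :=
    { parts := (Finset.univ : Finset (Quotient R)).val.map size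
      parts_pos := by
        intro i hi
        obtain ⟨c, _, rfl⟩ := Multiset.mem_map.1 hi
        obtain ⟨a, ha⟩ := Quotient.exists_rep c
        have : Nonempty {a // Quotient.mk R a = c} := ⟨⟨a, ha⟩⟩
        exact Nat.card_pos
      parts_sum := by
        rw [← Finset.sum_eq_multiset_sum, ← Nat.card_sigma,
          Nat.card_congr (Equiv.sigmaFiberEquiv _), Nat.card_fin] }
  obtain ⟨e, he⟩ := equiv_of_fib size (sz p) (fun v => by
    rw [fib_card_count, fib_card_count, sz_map])
  let f : AA p := ⟨fun a => e (Quotient.mk R a), fun i => by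
    obtain ⟨c, rfl⟩ := e.surjective i
    rw [he]
    exact Nat.card_congr (Equiv.subtypeEquiv (Equiv.refl _) fun a => by simp)⟩
  let f' : AA p := ⟨fun a => f.1 (g a), fun i => by
    rw [← f.2 i]
    exact Nat.card_congr (Equiv.subtypeEquiv g fun a => Iff.rfl)⟩
  refine ⟨p, (f, f'), (PP_eq _ _ _ _ _).2 ⟨fun a b => ?_, fun a => rfl⟩⟩
  simp only [f, e.apply_eq_iff_eq]
  exact Quotient.eq

theorem QQ_card (n : ℕ) : Nat.card (QQ n) = ∑ p : Nat.Partition n,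
    n.factorial ^ 2 / ∏ i ∈ Finset.Icc 1 n,
      ((p.parts.count i).factorial * i.factorial ^ (2 * p.parts.count i)) := by
  have hb : Function.Bijective
      (fun x : (Σ p : Nat.Partition n, Set.range (PP p)) => x.2.1) := by
    constructor
    · rintro ⟨p, _, w, rfl⟩ ⟨p', _, w', rfl⟩ h
      simp only at h
      obtain rfl := PP_disj p p' w w' h
      simp [h]
    · intro q
      obtain ⟨p, w, h⟩ := PP_cover q
      exact ⟨⟨p, PP p w, w, rfl⟩, h⟩
  rw [← Nat.card_eq_of_bijective _ hb, Nat.card_sigma]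
  refine Finset.sum_congr rfl fun p _ => ?_
  symm
  have h1 := AA_card p
  have h2 := range_card p
  rw [sz_prod] at h1
  apply Nat.div_eq_of_eq_mul_left
  · exact Finset.prod_pos fun i _ => by positivity
  · rw [Finset.prod_mul_distrib, ← mul_assoc, ← h2, ← h1]
    simp only [pow_mul', Finset.prod_pow]
    ring

end counting

/-- Theorem 2 of Kudryavtseva–Mazorchuk, in cardinality form: the monoid `T` is finite and
`|T| = Σ_{λ ⊢ n} (n!)² / Π_{i=1}^n (λ^{(i)}! (i!)^{2 λ^{(i)}})`, the cardinality of `IT_n`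
(to which `T` is isomorphic via `σ_i ↦ s_i`, `τ_i ↦ ϱ_i`), where `λ^{(i)}` is the number
of parts of the partition `λ` equal to `i`. -/
theorem IT_card_eq (n : ℕ) (hn : 1 ≤ n) :
    Finite (ITMonoid n) ∧
      Nat.card (ITMonoid n) =
        ∑ p : Nat.Partition n,
          n.factorial ^ 2 /
            ∏ i ∈ Finset.Icc 1 n,
              ((p.parts.count i).factorial * i.factorial ^ (2 * p.parts.count i)) := by
  obtain ⟨e⟩ := T_equiv_Q n hn
  exact ⟨Finite.of_equiv _ e.symm, by rw [Nat.card_congr e, QQ_card]⟩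
end
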